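/- arXiv:1910.01883 — 2 statements merged into one kernel-verified Lean document; each statement's English description precedes it below -/
import Mathlib

section
/- Let d ≥ 2, ν ∈ (0,2), γ < 0, λ ∈ (0,ν), and let r ∈ (max{d/(d+ν), (ν+λ)/(2ν), (2d−(ν−λ))/(2d)}, 1). There exists a constant C = C(λ,d,ν,γ,r) > 0 such that for every N ≥ 2 and every symmetric probability density F^N on ℝ^{dN} (invariant under permutations of its N coordinates in ℝ^d): sup_{i≠j} ∫_{ℝ^{dN}} |v_i − v_j|^{−λ} F^N(V) dV ≤ C ( I^N_{ν,γ}(F^N) + ∫_{ℝ^{dN}} |v₁|^{−γ r/(1−r)} F^N(V) dV + 1 ). -/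
open MeasureTheory ENNReal

noncomputable section

/-- `ℝ^d` as a Euclidean space. -/
abbrev Euc (d : ℕ) := EuclideanSpace ℝ (Fin d)

/-- Japanese bracket `⟨x⟩ = √(1+|x|²)`. -/
def jap {d : ℕ} (x : Euc d) : ℝ := Real.sqrt (1 + ‖x‖^2)

/-- Fractional Sobolev seminorm squared `|f|²_{H^s(ℝ^d)}`, valued in `[0,∞]`. -/
def fracSobolevSq (d : ℕ) (s : ℝ) (f : Euc d → ℝ) : ℝ≥0∞ :=
  ∫⁻ x : Euc d, ∫⁻ y : Euc d, ENNReal.ofReal ((f x - f y)^2 / ‖x - y‖ ^ ((d : ℝ) + 2*s))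

/-- Weighted normalized fractional Fisher information `I^N_{ν,γ}`, valued in `[0,∞]`. -/
def fisherInfo (d N : ℕ) (ν γ : ℝ) (G : (Fin N → Euc d) → ℝ) : ℝ≥0∞ :=
  (N : ℝ≥0∞)⁻¹ * ∑ i : Fin N, ∫⁻ V : Fin N → Euc d, ∫⁻ w : Euc d,
    ENNReal.ofReal ((jap (V i) ^ (γ/2) * Real.sqrt (G V)
      - jap w ^ (γ/2) * Real.sqrt (G (Function.update V i w)))^2
      / ‖V i - w‖ ^ ((d : ℝ) + ν))

/-- A probability density: measurable, nonnegative, total mass one. -/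
def IsProbDensity {α : Type*} [MeasureSpace α] (f : α → ℝ) : Prop :=
  Measurable f ∧ (∀ x, 0 ≤ f x) ∧ ∫⁻ x, ENNReal.ofReal (f x) = 1

/-- A symmetric (exchangeable) probability density on `(ℝ^d)^N`. -/
def IsSymDensity (d N : ℕ) (F : (Fin N → Euc d) → ℝ) : Prop :=
  IsProbDensity F ∧ ∀ (σ : Equiv.Perm (Fin N)) (V : Fin N → Euc d), F (V ∘ σ) = F V

/-!
On almost every slice in `v_i` the fractional Hardy inequality, with its singularity placed at
`v_j`, bounds `∫ |v_i - v_j|^{-ν} ⟨v_i⟩^γ F` by the Gagliardo energy of `⟨v_i⟩^{γ/2} √F`. The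
weight `⟨v_i⟩^γ` is removed by Young's inequality
`|v_i - v_j|^{-λ} ≤ |v_i - v_j|^{-ν} ⟨v_i⟩^γ + ⟨v_i⟩^m`, valid as soon as `-γλ ≤ m(ν - λ)`;
for `m = -γr/(1-r)` this reads `λ ≤ rν`. Symmetry identifies the terms of the Fisher information.

The Hardy inequality itself comes from a Schur-type absorption: `g(x)²` is compared with
`g(y)²` for `|y| ≥ R|x|`, and since `ν < d` a large `R` makes the second contribution a small
fraction of the first.
-/

section FractionalHardy

variable {X : Type*} [MeasurableSpace X]

lemma ofReal_sq_le_two_mul_add (a b : ℝ) :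
    ENNReal.ofReal (a ^ 2)
      ≤ 2 * ENNReal.ofReal ((a - b) ^ 2) + 2 * ENNReal.ofReal (b ^ 2) := by
  rw [← ENNReal.ofReal_ofNat 2, ← ENNReal.ofReal_mul zero_le_two,
    ← ENNReal.ofReal_mul zero_le_two, ← ENNReal.ofReal_add (by positivity) (by positivity)]
  exact ENNReal.ofReal_le_ofReal (by nlinarith [sq_nonneg (a - 2 * b)])

lemma lintegral_kernel_mul_sq_le {μ : Measure X} [SFinite μ] {w : X → X → ℝ≥0∞} {g : X → ℝ}
    (hw : Measurable (Function.uncurry w)) (hg : Measurable g) :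
    ∫⁻ x, ∫⁻ y, w x y * ENNReal.ofReal (g x ^ 2) ∂μ ∂μ
      ≤ 2 * ∫⁻ x, ∫⁻ y, w x y * ENNReal.ofReal ((g x - g y) ^ 2) ∂μ ∂μ
        + 2 * ∫⁻ x, ∫⁻ y, w x y * ENNReal.ofReal (g y ^ 2) ∂μ ∂μ := by
  have hdiff : Measurable fun p : X × X => w p.1 p.2 * ENNReal.ofReal ((g p.1 - g p.2) ^ 2) :=
    hw.mul (by fun_prop)
  have hsnd : Measurable fun p : X × X => w p.1 p.2 * ENNReal.ofReal (g p.2 ^ 2) :=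
    hw.mul (by fun_prop)
  rw [← lintegral_const_mul _ hdiff.lintegral_prod_right',
    ← lintegral_const_mul _ hsnd.lintegral_prod_right',
    ← lintegral_add_left (hdiff.lintegral_prod_right'.const_mul _)]
  refine lintegral_mono fun x => ?_
  have hdiff_x : Measurable fun y => w x y * ENNReal.ofReal ((g x - g y) ^ 2) :=
    hw.of_uncurry_left.mul (by fun_prop)
  have hsnd_x : Measurable fun y => w x y * ENNReal.ofReal (g y ^ 2) :=
    hw.of_uncurry_left.mul (by fun_prop)
  rw [← lintegral_const_mul _ hdiff_x, ← lintegral_const_mul _ hsnd_x,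
    ← lintegral_add_left (hdiff_x.const_mul _)]
  refine lintegral_mono fun y => ?_
  calc w x y * ENNReal.ofReal (g x ^ 2)
      ≤ w x y * (2 * ENNReal.ofReal ((g x - g y) ^ 2) + 2 * ENNReal.ofReal (g y ^ 2)) := by
        gcongr
        exact ofReal_sq_le_two_mul_add _ _
    _ = _ := by ring

/-- Averaging `g x ^ 2` against `g y ^ 2` with weights `w x y` reproduces half of the left-hand
side, which is then absorbed; this is where its finiteness enters. -/
theorem lintegral_mul_sq_le_of_kernel {μ : Measure X} [SFinite μ] {w : X → X → ℝ≥0∞}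
    {ρ : X → ℝ≥0∞} {g : X → ℝ} (hw : Measurable (Function.uncurry w)) (hρ : Measurable ρ)
    (hg : Measurable g) (hlower : ∀ᵐ x ∂μ, 4 * ρ x ≤ ∫⁻ y, w x y ∂μ)
    (hupper : ∀ᵐ y ∂μ, ∫⁻ x, w x y ∂μ ≤ ρ y)
    (hfin : ∫⁻ x, ρ x * ENNReal.ofReal (g x ^ 2) ∂μ ≠ ∞) :
    ∫⁻ x, ρ x * ENNReal.ofReal (g x ^ 2) ∂μ
      ≤ ∫⁻ x, ∫⁻ y, w x y * ENNReal.ofReal ((g x - g y) ^ 2) ∂μ ∂μ := by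
  set P := ∫⁻ x, ρ x * ENNReal.ofReal (g x ^ 2) ∂μ with hP
  set D := ∫⁻ x, ∫⁻ y, w x y * ENNReal.ofReal ((g x - g y) ^ 2) ∂μ ∂μ
  have hlower_sq : 4 * P ≤ ∫⁻ x, ∫⁻ y, w x y * ENNReal.ofReal (g x ^ 2) ∂μ ∂μ := by
    rw [hP, ← lintegral_const_mul _ (by fun_prop)]
    refine lintegral_mono_ae (hlower.mono fun x hx => ?_)
    rw [lintegral_mul_const _ hw.of_uncurry_left, ← mul_assoc]
    gcongr
  have hupper_sq : ∫⁻ x, ∫⁻ y, w x y * ENNReal.ofReal (g y ^ 2) ∂μ ∂μ ≤ P := by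
    rw [lintegral_lintegral_swap (hw.mul (by fun_prop)).aemeasurable]
    refine lintegral_mono_ae (hupper.mono fun y hy => ?_)
    rw [lintegral_mul_const _ hw.of_uncurry_right]
    gcongr
  have habsorb : 2 * P + 2 * P ≤ 2 * D + 2 * P := calc
    2 * P + 2 * P = 4 * P := by rw [← add_mul]; norm_num
    _ ≤ 2 * D + 2 * ∫⁻ x, ∫⁻ y, w x y * ENNReal.ofReal (g y ^ 2) ∂μ ∂μ :=
      hlower_sq.trans (lintegral_kernel_mul_sq_le hw hg)
    _ ≤ 2 * D + 2 * P := by gcongr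
  have htwo : 2 * P ≤ 2 * D :=
    ENNReal.le_of_add_le_add_right (ENNReal.mul_ne_top ofNat_ne_top hfin) habsorb
  exact (ENNReal.mul_le_mul_iff_right two_ne_zero ofNat_ne_top).mp htwo

open Module (finrank)

variable {E : Type*} [NormedAddCommGroup E]

/-- The kernel `‖y‖ ^ (-p)` restricted to the pairs with `R * ‖x‖ ≤ ‖y‖`; it compares the values of
a function at `x` with its values at points at least `R` times further from the origin. -/
def outerKernel (R p : ℝ) (x y : E) : ℝ≥0∞ :=
  {z : E | R * ‖x‖ ≤ ‖z‖}.indicator (fun z => ENNReal.ofReal (‖z‖ ^ (-p))) y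

lemma outerKernel_of_le {R p : ℝ} {x y : E} (h : R * ‖x‖ ≤ ‖y‖) :
    outerKernel R p x y = ENNReal.ofReal (‖y‖ ^ (-p)) :=
  Set.indicator_of_mem (by exact h) _

lemma outerKernel_of_lt {R p : ℝ} {x y : E} (h : ‖y‖ < R * ‖x‖) : outerKernel R p x y = 0 :=
  Set.indicator_of_notMem (by exact h.not_ge) _

lemma outerKernel_mul_sq_sub_le {R p : ℝ} (hR : 1 ≤ R) (hp : 0 ≤ p) (g : E → ℝ) (x y : E) :
    outerKernel R p x y * ENNReal.ofReal ((g x - g y) ^ 2)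
      ≤ ENNReal.ofReal (2 ^ p) * ENNReal.ofReal ((g x - g y) ^ 2 / ‖x - y‖ ^ p) := by
  rcases lt_or_ge ‖y‖ (R * ‖x‖) with hlt | hle
  · simp [outerKernel_of_lt hlt]
  rcases eq_or_ne x y with rfl | hxy
  · simp
  have hsub_pos : 0 < ‖x - y‖ := norm_sub_pos_iff.mpr hxy
  have hsub_le : ‖x - y‖ ≤ 2 * ‖y‖ := by
    have hx_le : ‖x‖ ≤ R * ‖x‖ := le_mul_of_one_le_left (norm_nonneg x) hR
    linarith [norm_sub_le x y]
  have hy : 0 < ‖y‖ := by linarith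
  have hkernel : ‖y‖ ^ (-p) ≤ 2 ^ p / ‖x - y‖ ^ p := by
    rw [le_div_iff₀ (by positivity), Real.rpow_neg hy.le, inv_mul_le_iff₀ (by positivity),
      mul_comm, ← Real.mul_rpow zero_le_two hy.le]
    exact Real.rpow_le_rpow hsub_pos.le hsub_le hp
  rw [outerKernel_of_le hle, ← ENNReal.ofReal_mul (by positivity),
    ← ENNReal.ofReal_mul (by positivity)]
  refine ENNReal.ofReal_le_ofReal ?_
  calc ‖y‖ ^ (-p) * (g x - g y) ^ 2 ≤ 2 ^ p / ‖x - y‖ ^ p * (g x - g y) ^ 2 := by gcongr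
    _ = _ := by ring

variable [MeasurableSpace E]

lemma setLIntegral_outerKernel_right {μ : Measure E} {R p δ : ℝ} (hR : 1 ≤ R) {x : E}
    (hx : δ ≤ ‖x‖) :
    ∫⁻ y in {y | δ ≤ ‖y‖}, outerKernel R p x y ∂μ = ∫⁻ y, outerKernel R p x y ∂μ := by
  refine setLIntegral_eq_of_support_subset fun y hy => ?_
  have hle : R * ‖x‖ ≤ ‖y‖ := not_lt.mp fun hlt => hy (outerKernel_of_lt hlt)
  exact (hx.trans (le_mul_of_one_le_left (norm_nonneg x) hR)).trans hle

lemma lintegral_norm_rpow_mul_sq_le_of_forall_setLIntegral {μ : Measure E} {ν : ℝ}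
    (hν : 0 < ν) {g : E → ℝ} {B : ℝ≥0∞}
    (hB : ∀ δ > 0, ∫⁻ x in {x | δ ≤ ‖x‖}, ENNReal.ofReal (‖x‖ ^ (-ν) * g x ^ 2) ∂μ ≤ B) :
    ∫⁻ x, ENNReal.ofReal (‖x‖ ^ (-ν) * g x ^ 2) ∂μ ≤ B := by
  have hsupport : (Function.support fun x => ENNReal.ofReal (‖x‖ ^ (-ν) * g x ^ 2))
      ⊆ ⋃ n : ℕ, {x : E | 1 / ((n : ℝ) + 1) ≤ ‖x‖} := by
    intro x hx
    have hx0 : x ≠ 0 := by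
      rintro rfl
      simp [Real.zero_rpow (neg_ne_zero.mpr hν.ne')] at hx
    obtain ⟨n, hn⟩ := exists_nat_one_div_lt (norm_pos_iff.mpr hx0)
    exact Set.mem_iUnion.mpr ⟨n, hn.le⟩
  have hmono : Monotone fun n : ℕ => {x : E | 1 / ((n : ℝ) + 1) ≤ ‖x‖} :=
    fun _ _ hmn => Set.ofPred_subset_ofPred.mpr fun _ hx =>
      (Nat.one_div_le_one_div hmn).trans hx
  rw [← setLIntegral_eq_of_support_subset hsupport,
    setLIntegral_iUnion_of_directed _ hmono.directed_le]
  exact iSup_le fun n => hB _ Nat.one_div_pos_of_nat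

/-- The Gagliardo energy `∬ (g x - g y)² / |x - y| ^ (dim E + ν)` of `g`, that is, the square of
its `H^{ν/2}` seminorm. -/
def gagliardoEnergy [NormedSpace ℝ E] (μ : Measure E) (ν : ℝ) (g : E → ℝ) : ℝ≥0∞ :=
  ∫⁻ x, ∫⁻ y, ENNReal.ofReal ((g x - g y) ^ 2 / ‖x - y‖ ^ ((finrank ℝ E : ℝ) + ν)) ∂μ ∂μ

lemma lintegral_outerKernel_mul_sq_sub_le [NormedSpace ℝ E] {μ : Measure E} {R ν : ℝ} (hR : 1 ≤ R)
    (hν : 0 ≤ finrank ℝ E + ν) (g : E → ℝ) :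
    ∫⁻ x, ∫⁻ y, outerKernel R (finrank ℝ E + ν) x y * ENNReal.ofReal ((g x - g y) ^ 2) ∂μ ∂μ
      ≤ ENNReal.ofReal (2 ^ (finrank ℝ E + ν)) * gagliardoEnergy μ ν g := by
  rw [gagliardoEnergy, ← lintegral_const_mul' _ _ ENNReal.ofReal_ne_top]
  refine lintegral_mono fun x => ?_
  rw [← lintegral_const_mul' _ _ ENNReal.ofReal_ne_top]
  exact lintegral_mono fun y => outerKernel_mul_sq_sub_le hR hν g x y

variable [BorelSpace E]

lemma measurable_outerKernel (R p : ℝ) :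
    Measurable (Function.uncurry (outerKernel R p : E → E → ℝ≥0∞)) := by
  have hset : MeasurableSet {q : E × E | R * ‖q.1‖ ≤ ‖q.2‖} :=
    measurableSet_le (by fun_prop) (by fun_prop)
  exact Measurable.indicator (f := fun q : E × E => ENNReal.ofReal (‖q.2‖ ^ (-p)))
    (by fun_prop) hset

lemma setLIntegral_norm_rpow_mul_sq_ne_top {μ : Measure E} {ν δ : ℝ} (hν : 0 ≤ ν) (hδ : 0 < δ)
    {g : E → ℝ} (hg : ∫⁻ x, ENNReal.ofReal (g x ^ 2) ∂μ ≠ ∞) :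
    ∫⁻ x in {x | δ ≤ ‖x‖}, ENNReal.ofReal (‖x‖ ^ (-ν) * g x ^ 2) ∂μ ≠ ∞ := by
  refine ne_top_of_le_ne_top (ENNReal.mul_ne_top (ENNReal.ofReal_ne_top (r := δ ^ (-ν))) hg) ?_
  rw [← lintegral_const_mul' _ _ ENNReal.ofReal_ne_top]
  refine (setLIntegral_mono' (measurableSet_le measurable_const measurable_norm)
    fun x hx => ?_).trans (setLIntegral_le_lintegral _ _)
  rw [← ENNReal.ofReal_mul (by positivity)]
  refine ENNReal.ofReal_le_ofReal (mul_le_mul_of_nonneg_right ?_ (sq_nonneg _))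
  exact Real.rpow_le_rpow_of_nonpos hδ hx (neg_nonpos.mpr hν)

variable [NormedSpace ℝ E] {μ : Measure E}

lemma gagliardoEnergy_comp_add_right [μ.IsAddRightInvariant] (ν : ℝ) (g : E → ℝ) (a : E) :
    gagliardoEnergy μ ν (fun x => g (x + a)) = gagliardoEnergy μ ν g := by
  unfold gagliardoEnergy
  conv_rhs => rw [← lintegral_add_right_eq_self _ a]
  refine lintegral_congr fun x => ?_
  conv_rhs => rw [← lintegral_add_right_eq_self _ a]
  simp only [add_sub_add_right_eq_sub]

variable [FiniteDimensional ℝ E] [μ.IsAddHaarMeasure]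

lemma lintegral_outerKernel_left {R ν : ℝ} {y : E} (hR : 0 < R) (hy : y ≠ 0) :
    ∫⁻ x, outerKernel R (finrank ℝ E + ν) x y ∂μ
      = ENNReal.ofReal (R ^ (-(finrank ℝ E : ℝ))) * μ (Metric.ball 0 1)
        * ENNReal.ofReal (‖y‖ ^ (-ν)) := by
  have hy0 : 0 < ‖y‖ := norm_pos_iff.mpr hy
  have hball (x : E) : outerKernel R (finrank ℝ E + ν) x y
      = (Metric.closedBall 0 (‖y‖ / R)).indicator
        (fun _ => ENNReal.ofReal (‖y‖ ^ (-((finrank ℝ E : ℝ) + ν)))) x := by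
    exact Set.indicator_eq_indicator (by simp [le_div_iff₀' hR]) rfl
  simp_rw [hball]
  rw [mul_right_comm, ← ENNReal.ofReal_mul (by positivity),
    lintegral_indicator_const measurableSet_closedBall, Measure.addHaar_closedBall _ _
    (by positivity), ← mul_assoc, ← ENNReal.ofReal_mul (by positivity), ← Real.rpow_natCast,
    neg_add, Real.rpow_add hy0, Real.div_rpow hy0.le hR.le, Real.rpow_neg hR.le,
    Real.rpow_neg hy0.le (finrank ℝ E : ℝ)]
  congr 2
  field_simp

lemma addHaar_ball_le_addHaar_annulus [Nontrivial E] (s : ℝ) :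
    μ (Metric.ball 0 s) ≤ μ (Metric.ball 0 (2 * s) \ Metric.ball 0 s) := by
  have hdouble : 2 * μ (Metric.ball 0 s) ≤ μ (Metric.ball 0 (2 * s)) := by
    rw [Measure.addHaar_ball_mul μ _ zero_le_two]
    gcongr
    rw [← ENNReal.ofReal_ofNat 2]
    exact ENNReal.ofReal_le_ofReal (le_self_pow₀ one_le_two Module.finrank_pos.ne')
  calc μ (Metric.ball 0 s) = 2 * μ (Metric.ball 0 s) - μ (Metric.ball 0 s) := by
        rw [two_mul, ENNReal.add_sub_cancel_right measure_ball_lt_top.ne]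
    _ ≤ μ (Metric.ball 0 (2 * s)) - μ (Metric.ball 0 s) := by gcongr
    _ ≤ _ := le_measure_sdiff

lemma le_lintegral_outerKernel_right [Nontrivial E] {R ν : ℝ} {x : E}
    (hν : 0 ≤ finrank ℝ E + ν) (hRx : 0 < R * ‖x‖) :
    ENNReal.ofReal (2 ^ (-((finrank ℝ E : ℝ) + ν)) * (R * ‖x‖) ^ (-ν)) * μ (Metric.ball 0 1)
      ≤ ∫⁻ y, outerKernel R (finrank ℝ E + ν) x y ∂μ := by
  set s := R * ‖x‖
  set A : Set E := Metric.ball 0 (2 * s) \ Metric.ball 0 s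
  have hA : MeasurableSet A := measurableSet_ball.diff measurableSet_ball
  have hkernel (y : E) (hy : y ∈ A) : ENNReal.ofReal ((2 * s) ^ (-((finrank ℝ E : ℝ) + ν)))
      ≤ outerKernel R (finrank ℝ E + ν) x y := by
    obtain ⟨hy2, hy1⟩ : ‖y‖ < 2 * s ∧ s ≤ ‖y‖ := by simpa [A] using hy
    rw [outerKernel_of_le hy1]
    exact ENNReal.ofReal_le_ofReal
      (Real.rpow_le_rpow_of_nonpos (hRx.trans_le hy1) hy2.le (neg_nonpos.mpr hν))
  calc _ = ENNReal.ofReal ((2 * s) ^ (-((finrank ℝ E : ℝ) + ν))) * μ (Metric.ball 0 s) := by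
        rw [Measure.addHaar_ball _ _ hRx.le, ← mul_assoc, ← ENNReal.ofReal_mul (by positivity),
          Real.mul_rpow zero_le_two hRx.le, mul_assoc (2 ^ _), ← Real.rpow_natCast,
          ← Real.rpow_add hRx]
        congr 5
        ring
    _ ≤ ENNReal.ofReal ((2 * s) ^ (-((finrank ℝ E : ℝ) + ν))) * μ A :=
        mul_le_mul' le_rfl (addHaar_ball_le_addHaar_annulus s)
    _ = ∫⁻ _ in A, ENNReal.ofReal ((2 * s) ^ (-((finrank ℝ E : ℝ) + ν))) ∂μ :=
        (setLIntegral_const _ _).symm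
    _ ≤ ∫⁻ y in A, outerKernel R (finrank ℝ E + ν) x y ∂μ := setLIntegral_mono' hA hkernel
    _ ≤ _ := setLIntegral_le_lintegral _ _

lemma four_mul_le_lintegral_outerKernel_right [Nontrivial E] {R ν : ℝ} (hν : 0 ≤ ν) (hR : 0 < R)
    (hRν : R ^ (finrank ℝ E - ν) = 2 ^ (finrank ℝ E + ν + 2)) {x : E} (hx : x ≠ 0) :
    4 * (ENNReal.ofReal (R ^ (-(finrank ℝ E : ℝ))) * μ (Metric.ball 0 1)
        * ENNReal.ofReal (‖x‖ ^ (-ν)))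
      ≤ ∫⁻ y, outerKernel R (finrank ℝ E + ν) x y ∂μ := by
  have hx0 : 0 < ‖x‖ := norm_pos_iff.mpr hx
  have hconst : 4 * R ^ (-(finrank ℝ E : ℝ)) = 2 ^ (-((finrank ℝ E : ℝ) + ν)) * R ^ (-ν) := by
    have hsplit : R ^ (-ν) = R ^ (finrank ℝ E - ν) * R ^ (-(finrank ℝ E : ℝ)) := by
      rw [← Real.rpow_add hR]
      ring_nf
    rw [hsplit, hRν, ← mul_assoc, ← Real.rpow_add two_pos,
      show -((finrank ℝ E : ℝ) + ν) + (finrank ℝ E + ν + 2) = 2 by ring]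
    norm_num
  refine le_trans (le_of_eq ?_) (le_lintegral_outerKernel_right (by positivity) (by positivity))
  rw [mul_right_comm, ← ENNReal.ofReal_mul (by positivity), ← mul_assoc,
    ← ENNReal.ofReal_ofNat 4, ← ENNReal.ofReal_mul (by positivity), ← mul_assoc, hconst,
    Real.mul_rpow hR.le hx0.le, mul_assoc]

/-- The truncation `δ ≤ ‖x‖` makes the left-hand side finite, as the absorption requires. -/
lemma setLIntegral_norm_rpow_mul_sq_le [Nontrivial E] {R ν : ℝ} (hν : 0 ≤ ν) (hR : 1 ≤ R)
    (hRν : R ^ (finrank ℝ E - ν) = 2 ^ (finrank ℝ E + ν + 2)) {g : E → ℝ} (hg : Measurable g)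
    (hgL2 : ∫⁻ x, ENNReal.ofReal (g x ^ 2) ∂μ ≠ ∞) {δ : ℝ} (hδ : 0 < δ) :
    ENNReal.ofReal (R ^ (-(finrank ℝ E : ℝ))) * μ (Metric.ball 0 1)
        * ∫⁻ x in {x | δ ≤ ‖x‖}, ENNReal.ofReal (‖x‖ ^ (-ν) * g x ^ 2) ∂μ
      ≤ ENNReal.ofReal (2 ^ (finrank ℝ E + ν)) * gagliardoEnergy μ ν g := by
  set Ω : Set E := {x | δ ≤ ‖x‖}
  set c : ℝ≥0∞ := ENNReal.ofReal (R ^ (-(finrank ℝ E : ℝ))) * μ (Metric.ball 0 1)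
  set w : E → E → ℝ≥0∞ := outerKernel R (finrank ℝ E + ν)
  have hR0 : 0 < R := zero_lt_one.trans_le hR
  have hΩ : MeasurableSet Ω := measurableSet_le measurable_const measurable_norm
  have hΩ0 (x : E) (hx : x ∈ Ω) : x ≠ 0 := norm_pos_iff.mp (hδ.trans_le hx)
  have hlower (x : E) (hx : x ∈ Ω) :
      4 * (c * ENNReal.ofReal (‖x‖ ^ (-ν))) ≤ ∫⁻ y in Ω, w x y ∂μ := by
    rw [setLIntegral_outerKernel_right hR hx]
    exact four_mul_le_lintegral_outerKernel_right hν hR0 hRν (hΩ0 x hx)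
  have hupper (y : E) (hy : y ∈ Ω) : ∫⁻ x in Ω, w x y ∂μ ≤ c * ENNReal.ofReal (‖y‖ ^ (-ν)) :=
    (setLIntegral_le_lintegral _ _).trans (lintegral_outerKernel_left hR0 (hΩ0 y hy)).le
  have hweight : c * ∫⁻ x in Ω, ENNReal.ofReal (‖x‖ ^ (-ν) * g x ^ 2) ∂μ
      = ∫⁻ x in Ω, c * ENNReal.ofReal (‖x‖ ^ (-ν)) * ENNReal.ofReal (g x ^ 2) ∂μ := by
    simp_rw [← lintegral_const_mul c (show Measurable fun x =>
      ENNReal.ofReal (‖x‖ ^ (-ν) * g x ^ 2) by fun_prop), mul_assoc,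
      ENNReal.ofReal_mul (Real.rpow_nonneg (norm_nonneg _) _)]
  have hfin := ENNReal.mul_ne_top (a := c)
    (ENNReal.mul_ne_top ENNReal.ofReal_ne_top measure_ball_lt_top.ne)
    (setLIntegral_norm_rpow_mul_sq_ne_top hν hδ hgL2)
  rw [hweight] at hfin ⊢
  calc _ ≤ ∫⁻ x in Ω, ∫⁻ y in Ω, w x y * ENNReal.ofReal ((g x - g y) ^ 2) ∂μ ∂μ :=
        lintegral_mul_sq_le_of_kernel (measurable_outerKernel R _) (by fun_prop) hg
          (ae_restrict_of_forall_mem hΩ hlower) (ae_restrict_of_forall_mem hΩ hupper) hfin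
    _ ≤ ∫⁻ x, ∫⁻ y, w x y * ENNReal.ofReal ((g x - g y) ^ 2) ∂μ ∂μ :=
        lintegral_mono' Measure.restrict_le_self fun x =>
          lintegral_mono' Measure.restrict_le_self le_rfl
    _ ≤ _ := lintegral_outerKernel_mul_sq_sub_le hR (by positivity) g

theorem fractional_hardy_inequality (μ : Measure E) [μ.IsAddHaarMeasure] {ν : ℝ}
    (hν : 0 < ν) (hνE : ν < finrank ℝ E) :
    ∃ C > (0 : ℝ), ∀ g : E → ℝ, Measurable g → ∫⁻ x, ENNReal.ofReal (g x ^ 2) ∂μ ≠ ∞ → ∀ a : E,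
      ∫⁻ x, ENNReal.ofReal (‖x - a‖ ^ (-ν) * g x ^ 2) ∂μ
        ≤ ENNReal.ofReal C * gagliardoEnergy μ ν g := by
  have : Nontrivial E := Module.finrank_pos_iff.mp (by exact_mod_cast hν.trans hνE)
  have hgap : 0 < finrank ℝ E - ν := sub_pos.mpr hνE
  obtain ⟨R, hR, hRν⟩ : ∃ R : ℝ, 1 ≤ R ∧ R ^ (finrank ℝ E - ν) = 2 ^ (finrank ℝ E + ν + 2) := by
    refine ⟨2 ^ ((finrank ℝ E + ν + 2) / (finrank ℝ E - ν)),
      Real.one_le_rpow one_le_two (by positivity), ?_⟩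
    rw [← Real.rpow_mul zero_le_two, div_mul_cancel₀ _ hgap.ne']
  set c : ℝ≥0∞ := ENNReal.ofReal (R ^ (-(finrank ℝ E : ℝ))) * μ (Metric.ball 0 1)
  have hc : c ≠ ∞ := ENNReal.mul_ne_top ENNReal.ofReal_ne_top measure_ball_lt_top.ne
  have hc0 : c ≠ 0 := mul_ne_zero
    (ENNReal.ofReal_pos.mpr (Real.rpow_pos_of_pos (zero_lt_one.trans_le hR) _)).ne'
    (Metric.measure_ball_pos μ 0 one_pos).ne'
  have hc_pos : 0 < c.toReal := ENNReal.toReal_pos hc0 hc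
  refine ⟨2 ^ (finrank ℝ E + ν) / c.toReal, by positivity, fun g hg hgL2 a => ?_⟩
  rw [← lintegral_add_right_eq_self _ a, ← gagliardoEnergy_comp_add_right ν g a,
    ENNReal.ofReal_div_of_pos hc_pos, ENNReal.ofReal_toReal hc]
  simp only [add_sub_cancel_right]
  refine lintegral_norm_rpow_mul_sq_le_of_forall_setLIntegral hν fun δ hδ => ?_
  rw [← ENNReal.mul_div_right_comm, ENNReal.le_div_iff_mul_le (.inl hc0) (.inl hc), mul_comm]
  refine setLIntegral_norm_rpow_mul_sq_le hν.le hR hRν (by fun_prop) ?_ hδ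
  rwa [lintegral_add_right_eq_self (fun x => ENNReal.ofReal (g x ^ 2)) a]

end FractionalHardy

section ProductSpace

lemma measurable_insertNth {X : Type*} [MeasurableSpace X] {n : ℕ} (i : Fin (n + 1)) :
    Measurable fun p : X × (Fin n → X) => (i.insertNth p.1 p.2 : Fin (n + 1) → X) :=
  (MeasurableEquiv.piFinSuccAbove (fun _ : Fin (n + 1) => X) i).symm.measurable

variable {X : Type*} [MeasureSpace X] [SigmaFinite (volume : Measure X)]

lemma lintegral_comp_perm {ι : Type*} [Fintype ι] (σ : Equiv.Perm ι) (f : (ι → X) → ℝ≥0∞) :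
    ∫⁻ V, f (V ∘ σ) = ∫⁻ V, f V :=
  (volume_preserving_arrowCongr' σ.symm (.refl X) (.id volume)).lintegral_comp_emb
    (MeasurableEquiv.measurableEmbedding _) f

lemma lintegral_eq_lintegral_insertNth {n : ℕ} (i : Fin (n + 1)) {f : (Fin (n + 1) → X) → ℝ≥0∞}
    (hf : Measurable f) :
    ∫⁻ V, f V = ∫⁻ U : Fin n → X, ∫⁻ v : X, f (i.insertNth v U) := by
  have hpres := (volume_preserving_piFinSuccAbove (fun _ : Fin (n + 1) => X) i).symm
  rw [← hpres.lintegral_comp_emb (MeasurableEquiv.measurableEmbedding _) f]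
  exact lintegral_prod_symm _ (hf.comp (measurable_insertNth i)).aemeasurable

end ProductSpace

section CoordinateEnergy

open Module (finrank)

variable {E : Type*} [NormedAddCommGroup E] [NormedSpace ℝ E] [MeasureSpace E]
  {ι : Type*} [Fintype ι] [DecidableEq ι]

/-- The Gagliardo energy of `Φ` in its `i`-th variable, integrated over the remaining ones. The
integral over `V : ι → E` comprises both the remaining variables and the first point `V i` of the
energy; `w` is the second point. -/
def coordGagliardoEnergy (ν : ℝ) (i : ι) (Φ : (ι → E) → ℝ) : ℝ≥0∞ :=
  ∫⁻ V : ι → E, ∫⁻ w : E, ENNReal.ofReal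
    ((Φ V - Φ (Function.update V i w)) ^ 2 / ‖V i - w‖ ^ ((finrank ℝ E : ℝ) + ν))

lemma coordGagliardoEnergy_comp_perm [SigmaFinite (volume : Measure E)] (ν : ℝ) (i : ι)
    (Φ : (ι → E) → ℝ) (σ : Equiv.Perm ι) :
    coordGagliardoEnergy ν (σ i) (fun V => Φ (V ∘ σ)) = coordGagliardoEnergy ν i Φ := by
  unfold coordGagliardoEnergy
  conv_rhs => rw [← lintegral_comp_perm σ]
  simp only [Function.update_comp_eq_of_injective _ σ.injective, Function.comp_apply]

variable [BorelSpace E]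

lemma coordGagliardoEnergy_eq_lintegral_gagliardoEnergy [SecondCountableTopology E]
    [SigmaFinite (volume : Measure E)] {n : ℕ} (ν : ℝ) (i : Fin (n + 1))
    {Φ : (Fin (n + 1) → E) → ℝ} (hΦ : Measurable Φ) :
    coordGagliardoEnergy ν i Φ
      = ∫⁻ U : Fin n → E, gagliardoEnergy volume ν fun v => Φ (i.insertNth v U) := by
  have hupdate : Measurable fun p : (Fin (n + 1) → E) × E => Φ (Function.update p.1 i p.2) :=
    hΦ.comp measurable_update'
  have hintegrand : Measurable fun p : (Fin (n + 1) → E) × E => ENNReal.ofReal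
      ((Φ p.1 - Φ (Function.update p.1 i p.2)) ^ 2
        / ‖p.1 i - p.2‖ ^ ((finrank ℝ E : ℝ) + ν)) :=
    ((((hΦ.comp measurable_fst).sub hupdate).pow_const 2).div (by fun_prop)).ennreal_ofReal
  rw [coordGagliardoEnergy, lintegral_eq_lintegral_insertNth i hintegrand.lintegral_prod_right']
  simp only [Fin.update_insertNth, Fin.insertNth_apply_same, gagliardoEnergy]

theorem exists_lintegral_norm_sub_rpow_mul_sq_le_coordGagliardoEnergy [FiniteDimensional ℝ E]
    [(volume : Measure E).IsAddHaarMeasure] {ν : ℝ} (hν : 0 < ν) (hνE : ν < finrank ℝ E) :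
    ∃ C > (0 : ℝ), ∀ (N : ℕ) (Φ : (Fin N → E) → ℝ), Measurable Φ →
      ∫⁻ V, ENNReal.ofReal (Φ V ^ 2) ≠ ∞ → ∀ i j : Fin N, i ≠ j →
        ∫⁻ V, ENNReal.ofReal (‖V i - V j‖ ^ (-ν) * Φ V ^ 2)
          ≤ ENNReal.ofReal C * coordGagliardoEnergy ν i Φ := by
  obtain ⟨C, hC, hardy⟩ := fractional_hardy_inequality (volume : Measure E) hν hνE
  refine ⟨C, hC, fun N Φ hΦ hΦL2 i j hij => ?_⟩
  obtain ⟨n, rfl⟩ : ∃ n, N = n + 1 := Nat.exists_eq_add_one.mpr i.pos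
  obtain ⟨k, rfl⟩ := Fin.exists_succAbove_eq hij.symm
  have hslice : Measurable fun p : E × (Fin n → E) => Φ (i.insertNth p.1 p.2) :=
    hΦ.comp (measurable_insertNth i)
  have hslice_finite : ∀ᵐ U : Fin n → E, ∫⁻ v, ENNReal.ofReal (Φ (i.insertNth v U) ^ 2) < ∞ := by
    rw [lintegral_eq_lintegral_insertNth i (by fun_prop)] at hΦL2
    exact ae_lt_top (hslice.pow_const 2).ennreal_ofReal.lintegral_prod_left' hΦL2
  rw [coordGagliardoEnergy_eq_lintegral_gagliardoEnergy ν i hΦ,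
    lintegral_eq_lintegral_insertNth i (by fun_prop),
    ← lintegral_const_mul' _ _ ENNReal.ofReal_ne_top]
  refine lintegral_mono_ae (hslice_finite.mono fun U hU => ?_)
  simp only [Fin.insertNth_apply_same, Fin.insertNth_apply_succAbove]
  exact hardy _ (hslice.comp measurable_prodMk_right) hU.ne (U k)

end CoordinateEnergy

section Young

lemma rpow_neg_le_rpow_neg_mul_add {t τ lam ν : ℝ} (ht : 0 ≤ t) (hτ : 0 < τ) (hlam : 0 < lam)
    (hlν : lam ≤ ν) : t ^ (-lam) ≤ t ^ (-ν) * τ ^ (ν - lam) + τ ^ (-lam) := by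
  rcases le_total τ t with hτt | htτ
  · exact (Real.rpow_le_rpow_of_nonpos hτ hτt (neg_nonpos.mpr hlam.le)).trans
      (le_add_of_nonneg_left (by positivity))
  rcases ht.eq_or_lt with rfl | ht
  · rw [Real.zero_rpow (neg_ne_zero.mpr hlam.ne')]
    positivity
  calc t ^ (-lam) = t ^ (-ν) * t ^ (ν - lam) := by
        rw [← Real.rpow_add ht]
        ring_nf
    _ ≤ t ^ (-ν) * τ ^ (ν - lam) := by gcongr
    _ ≤ _ := le_add_of_nonneg_right (by positivity)

lemma rpow_neg_le_rpow_neg_mul_rpow_add_rpow {t J lam ν γ m : ℝ} (ht : 0 ≤ t) (hJ : 1 ≤ J)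
    (hlam : 0 < lam) (hlν : lam < ν) (hm : -γ * lam ≤ m * (ν - lam)) :
    t ^ (-lam) ≤ t ^ (-ν) * J ^ γ + J ^ m := by
  have hJ0 : 0 < J := zero_lt_one.trans_le hJ
  have hgap : 0 < ν - lam := sub_pos.mpr hlν
  have hfst : (J ^ (γ / (ν - lam))) ^ (ν - lam) = J ^ γ := by
    rw [← Real.rpow_mul hJ0.le, div_mul_cancel₀ _ hgap.ne']
  have hsnd : (J ^ (γ / (ν - lam))) ^ (-lam) ≤ J ^ m := by
    rw [← Real.rpow_mul hJ0.le, div_mul_eq_mul_div, mul_neg, ← neg_mul]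
    exact Real.rpow_le_rpow_of_exponent_le hJ ((div_le_iff₀ hgap).mpr hm)
  calc t ^ (-lam) ≤ _ := rpow_neg_le_rpow_neg_mul_add ht (Real.rpow_pos_of_pos hJ0 _) hlam hlν.le
    _ ≤ _ := by rw [hfst]; gcongr

end Young

section JapaneseBracket

variable {d : ℕ}

lemma one_le_jap (x : Euc d) : 1 ≤ jap x :=
  Real.one_le_sqrt.mpr (le_add_of_nonneg_right (by positivity))

lemma measurable_jap : Measurable (jap : Euc d → ℝ) := by
  unfold jap
  fun_prop

lemma jap_le_two_mul_max (x : Euc d) : jap x ≤ 2 * max 1 ‖x‖ := by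
  refine Real.sqrt_le_iff.mpr ⟨by positivity, ?_⟩
  nlinarith [norm_nonneg x, le_max_left 1 ‖x‖, le_max_right 1 ‖x‖]

lemma jap_rpow_le {m : ℝ} (hm : 0 ≤ m) (x : Euc d) : jap x ^ m ≤ 2 ^ m * (1 + ‖x‖ ^ m) := by
  have hmax : max 1 ‖x‖ ^ m ≤ 1 + ‖x‖ ^ m := by
    rcases max_cases 1 ‖x‖ with ⟨h, -⟩ | ⟨h, -⟩ <;> rw [h]
    · simpa using Real.rpow_nonneg (norm_nonneg x) m
    · exact le_add_of_nonneg_left zero_le_one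
  calc jap x ^ m ≤ (2 * max 1 ‖x‖) ^ m :=
        Real.rpow_le_rpow (zero_le_one.trans (one_le_jap x)) (jap_le_two_mul_max x) hm
    _ = 2 ^ m * max 1 ‖x‖ ^ m := Real.mul_rpow zero_le_two (by positivity)
    _ ≤ 2 ^ m * (1 + ‖x‖ ^ m) := by gcongr

end JapaneseBracket

section FisherInformation

variable {d N : ℕ} {F : (Fin N → Euc d) → ℝ}

/-- `⟨v_i⟩^{γ/2} √F`, the function whose fractional regularity in `v_i` is measured by the `i`-th
term of the Fisher information. -/
def japWeightedSqrt (γ : ℝ) (F : (Fin N → Euc d) → ℝ) (i : Fin N) (V : Fin N → Euc d) : ℝ :=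
  jap (V i) ^ (γ / 2) * √(F V)

lemma measurable_japWeightedSqrt (γ : ℝ) (hF : Measurable F) (i : Fin N) :
    Measurable (japWeightedSqrt γ F i) := by
  have := measurable_jap (d := d)
  unfold japWeightedSqrt
  fun_prop

lemma japWeightedSqrt_sq (γ : ℝ) (i : Fin N) {V : Fin N → Euc d} (hF : 0 ≤ F V) :
    japWeightedSqrt γ F i V ^ 2 = jap (V i) ^ γ * F V := by
  rw [japWeightedSqrt, mul_pow, Real.sq_sqrt hF, ← Real.rpow_mul_natCast
    (zero_le_one.trans (one_le_jap _)), Nat.cast_ofNat, div_mul_cancel₀ _ two_ne_zero]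

lemma lintegral_japWeightedSqrt_sq_ne_top {γ : ℝ} (hγ : γ ≤ 0) (hF : IsProbDensity F)
    (i : Fin N) : ∫⁻ V, ENNReal.ofReal (japWeightedSqrt γ F i V ^ 2) ≠ ∞ := by
  obtain ⟨-, hF0, hF1⟩ := hF
  refine ne_top_of_le_ne_top (hF1 ▸ one_ne_top) (lintegral_mono fun V => ?_)
  rw [japWeightedSqrt_sq γ i (hF0 V)]
  exact ENNReal.ofReal_le_ofReal (mul_le_of_le_one_left (hF0 V)
    (Real.rpow_le_one_of_one_le_of_nonpos (one_le_jap _) hγ))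

lemma fisherInfo_eq_sum (ν γ : ℝ) (F : (Fin N → Euc d) → ℝ) :
    fisherInfo d N ν γ F
      = (N : ℝ≥0∞)⁻¹ * ∑ i, coordGagliardoEnergy ν i (japWeightedSqrt γ F i) := by
  simp only [fisherInfo, coordGagliardoEnergy, japWeightedSqrt, Function.update_self,
    finrank_euclideanSpace_fin]

namespace IsSymDensity

lemma fisherInfo_eq (hF : IsSymDensity d N F) (ν γ : ℝ) (i : Fin N) :
    fisherInfo d N ν γ F = coordGagliardoEnergy ν i (japWeightedSqrt γ F i) := by
  have hterm (k : Fin N) : coordGagliardoEnergy ν k (japWeightedSqrt γ F k)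
      = coordGagliardoEnergy ν i (japWeightedSqrt γ F i) := by
    have hweight : japWeightedSqrt γ F (Equiv.swap i k i)
        = fun V => japWeightedSqrt γ F i (V ∘ Equiv.swap i k) := by
      simp only [funext_iff, japWeightedSqrt, hF.2, Function.comp_apply, implies_true]
    rw [← coordGagliardoEnergy_comp_perm ν i (japWeightedSqrt γ F i) (Equiv.swap i k), ← hweight,
      Equiv.swap_apply_left]
  have hN : (N : ℝ≥0∞) ≠ 0 := Nat.cast_ne_zero.mpr i.pos.ne'
  rw [fisherInfo_eq_sum, Finset.sum_congr rfl fun k _ => hterm k, Finset.sum_const,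
    Finset.card_univ, Fintype.card_fin, nsmul_eq_mul, ← mul_assoc,
    ENNReal.inv_mul_cancel hN (ENNReal.natCast_ne_top N), one_mul]

lemma lintegral_norm_rpow_mul_eq (hF : IsSymDensity d N F) (m : ℝ) (i k : Fin N) :
    ∫⁻ V, ENNReal.ofReal (‖V i‖ ^ m * F V) = ∫⁻ V, ENNReal.ofReal (‖V k‖ ^ m * F V) := by
  conv_lhs => rw [← lintegral_comp_perm (Equiv.swap i k)]
  simp only [hF.2, Function.comp_apply, Equiv.swap_apply_left]

end IsSymDensity

lemma ofReal_norm_sub_rpow_mul_le {ν γ lam m : ℝ} (hlam : 0 < lam) (hlν : lam < ν) (hm0 : 0 ≤ m)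
    (hm : -γ * lam ≤ m * (ν - lam)) (i j : Fin N) {V : Fin N → Euc d} (hF : 0 ≤ F V) :
    ENNReal.ofReal (‖V i - V j‖ ^ (-lam) * F V)
      ≤ ENNReal.ofReal (‖V i - V j‖ ^ (-ν) * japWeightedSqrt γ F i V ^ 2)
        + ENNReal.ofReal (2 ^ m) * (ENNReal.ofReal (‖V i‖ ^ m * F V) + ENNReal.ofReal (F V)) := by
  rw [← ENNReal.ofReal_add (by positivity) hF, ← ENNReal.ofReal_mul (by positivity),
    ← ENNReal.ofReal_add (by positivity) (by positivity), japWeightedSqrt_sq γ i hF]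
  refine ENNReal.ofReal_le_ofReal ?_
  calc ‖V i - V j‖ ^ (-lam) * F V
      ≤ (‖V i - V j‖ ^ (-ν) * jap (V i) ^ γ + jap (V i) ^ m) * F V := by
        gcongr
        exact rpow_neg_le_rpow_neg_mul_rpow_add_rpow (norm_nonneg _) (one_le_jap _) hlam hlν hm
    _ ≤ (‖V i - V j‖ ^ (-ν) * jap (V i) ^ γ + 2 ^ m * (1 + ‖V i‖ ^ m)) * F V := by
        gcongr
        exact jap_rpow_le hm0 _
    _ = _ := by ring

theorem exists_lintegral_norm_sub_rpow_mul_le {ν γ lam m : ℝ} (hνd : ν < d) (hγ : γ ≤ 0)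
    (hlam : 0 < lam) (hlν : lam < ν) (hm0 : 0 ≤ m) (hm : -γ * lam ≤ m * (ν - lam)) :
    ∃ C > (0 : ℝ), ∀ (N : ℕ) (F : (Fin N → Euc d) → ℝ), IsProbDensity F → ∀ i j : Fin N, i ≠ j →
      ∫⁻ V, ENNReal.ofReal (‖V i - V j‖ ^ (-lam) * F V)
        ≤ ENNReal.ofReal C * (coordGagliardoEnergy ν i (japWeightedSqrt γ F i)
          + (∫⁻ V, ENNReal.ofReal (‖V i‖ ^ m * F V)) + 1) := by
  obtain ⟨C, hC, hardy⟩ := exists_lintegral_norm_sub_rpow_mul_sq_le_coordGagliardoEnergy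
    (E := Euc d) (hlam.trans hlν) (by simpa using hνd)
  refine ⟨C + 2 ^ m, by positivity, fun N F hF i j hij => ?_⟩
  have hFm := hF.1
  have hG := measurable_japWeightedSqrt γ hFm i
  set D := coordGagliardoEnergy ν i (japWeightedSqrt γ F i)
  set M := ∫⁻ V, ENNReal.ofReal (‖V i‖ ^ m * F V)
  calc ∫⁻ V, ENNReal.ofReal (‖V i - V j‖ ^ (-lam) * F V)
      ≤ ∫⁻ V, (ENNReal.ofReal (‖V i - V j‖ ^ (-ν) * japWeightedSqrt γ F i V ^ 2)
          + ENNReal.ofReal (2 ^ m)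
            * (ENNReal.ofReal (‖V i‖ ^ m * F V) + ENNReal.ofReal (F V))) :=
        lintegral_mono fun V => ofReal_norm_sub_rpow_mul_le hlam hlν hm0 hm i j (hF.2.1 V)
    _ = (∫⁻ V, ENNReal.ofReal (‖V i - V j‖ ^ (-ν) * japWeightedSqrt γ F i V ^ 2))
          + ENNReal.ofReal (2 ^ m) * (M + 1) := by
        rw [lintegral_add_left (by fun_prop), lintegral_const_mul _ (by fun_prop),
          lintegral_add_left (by fun_prop), hF.2.2]
    _ ≤ ENNReal.ofReal C * D + ENNReal.ofReal (2 ^ m) * (M + 1) := by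
        gcongr
        exact hardy N _ hG (lintegral_japWeightedSqrt_sq_ne_top hγ hF i) i j hij
    _ ≤ ENNReal.ofReal C * (D + M + 1) + ENNReal.ofReal (2 ^ m) * (D + M + 1) := by
        gcongr
        · exact le_self_add.trans le_self_add
        · exact le_add_self
    _ = ENNReal.ofReal (C + 2 ^ m) * (D + M + 1) := by
        rw [ENNReal.ofReal_add hC.le (by positivity), add_mul]

end FisherInformation

theorem stmt_1_general {d : ℕ} {ν γ lam r : ℝ} (hν : 0 < ν) (hνd : ν < d) (hγ : γ ≤ 0)
    (hlam : 0 < lam) (hr : r < 1) (hlr : lam ≤ r * ν) :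
    ∃ C > (0 : ℝ), ∀ (N : ℕ) (F : (Fin N → Euc d) → ℝ), IsSymDensity d N F →
      ∀ i j k : Fin N, i ≠ j →
        ∫⁻ V, ENNReal.ofReal (‖V i - V j‖ ^ (-lam) * F V)
          ≤ ENNReal.ofReal C * (fisherInfo d N ν γ F
            + (∫⁻ V, ENNReal.ofReal (‖V k‖ ^ (-γ * r / (1 - r)) * F V)) + 1) := by
  have hr0 : 0 < r := pos_of_mul_pos_left (hlam.trans_le hlr) hν.le
  have hm0 : 0 ≤ -γ * r / (1 - r) :=
    div_nonneg (mul_nonneg (neg_nonneg.mpr hγ) hr0.le) (sub_nonneg.mpr hr.le)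
  have hm : -γ * lam ≤ -γ * r / (1 - r) * (ν - lam) := by
    rw [div_mul_eq_mul_div, le_div_iff₀ (sub_pos.mpr hr), mul_assoc, mul_assoc]
    exact mul_le_mul_of_nonneg_left (by linarith) (neg_nonneg.mpr hγ)
  obtain ⟨C, hC, hbound⟩ :=
    exists_lintegral_norm_sub_rpow_mul_le hνd hγ hlam (by nlinarith) hm0 hm
  refine ⟨C, hC, fun N F hF i j k hij => ?_⟩
  rw [hF.fisherInfo_eq ν γ i, hF.lintegral_norm_rpow_mul_eq _ k i]
  exact hbound N F hF.1 i j hij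

/-- Hardy–Littlewood–Sobolev-type inequality for non-tensorized measures:
the singular moment `∫ |v_i - v_j|^{-λ} F^N` is controlled by the weighted fractional
Fisher information, a negative moment of `v₁`, and a constant. -/
theorem stmt_1 (d : ℕ) (hd : 2 ≤ d) (ν γ lam r : ℝ)
    (hν : ν ∈ Set.Ioo (0 : ℝ) 2) (hγ : γ < 0) (hlam : lam ∈ Set.Ioo 0 ν)
    (hr : r ∈ Set.Ioo
      (max (max ((d : ℝ)/((d : ℝ)+ν)) ((ν+lam)/(2*ν))) ((2*(d : ℝ) - (ν - lam))/(2*(d : ℝ)))) 1) :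
    ∃ C > (0 : ℝ), ∀ N : ℕ, (hN : 2 ≤ N) → ∀ F : (Fin N → Euc d) → ℝ, IsSymDensity d N F →
      ∀ i j : Fin N, i ≠ j →
        (∫⁻ V : Fin N → Euc d, ENNReal.ofReal (‖V i - V j‖ ^ (-lam) * F V))
          ≤ ENNReal.ofReal C * (fisherInfo d N ν γ F
            + (∫⁻ V : Fin N → Euc d,
                ENNReal.ofReal (‖V ⟨0, by omega⟩‖ ^ (-γ * r/(1-r)) * F V))
            + 1) := by
  obtain ⟨⟨-, hlr⟩, -⟩ := (max_lt_iff.mp hr.1).imp_left max_lt_iff.mp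
  rw [div_lt_iff₀ (mul_pos two_pos hν.1)] at hlr
  have hνd : ν < d := hν.2.trans_le (by exact_mod_cast hd)
  obtain ⟨C, hC, hbound⟩ :=
    stmt_1_general (r := r) hν.1 hνd hγ.le hlam.1 hr.2 (by linarith [hlam.2])
  exact ⟨C, hC, fun N _ F hF i j hij => hbound N F hF i j _ hij⟩

end
end

section
/- Let d ≥ 1, ν ∈ (0,2), γ ≤ 0. Let (F_N)_{N≥2} be a sequence where each F_N is a symmetric probability density on ℝ^{dN}, and let π be a Borel probability measure on the space of Borel probability measures on ℝ^d (endowed with the topology of weak convergence) such that for every j ≥ 2 the j-particle marginal F_N^j (the pushforward of F_N by the projection onto the first j coordinates in ℝ^d) converges weakly, as N → ∞, to the mixture ∫ ρ^{⊗j} π(dρ). Then liminf_{N→∞} I^N_{ν,γ}(F_N) ≥ ∫ |⟨·⟩^{γ/2} √ρ|²_{H^{ν/2}(ℝ^d)} π(dρ), where the integrand is understood as the seminorm of ⟨·⟩^{γ/2}√(dρ/dx) when ρ is absolutely continuous and as +∞ otherwise. -/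
open MeasureTheory ENNReal

noncomputable section

open scoped Classical

/-- Borel σ-algebra on the space of probability measures with its weak topology. -/
instance pmBorel {α : Type*} [MeasurableSpace α] [TopologicalSpace α]
    [OpensMeasurableSpace α] : MeasurableSpace (ProbabilityMeasure α) := borel _

/-- `|⟨·⟩^{γ/2} √ρ|²_{H^{ν/2}}` for a measure `ρ`: the seminorm of the square root of its
Lebesgue density when `ρ ≪ volume`, and `+∞` otherwise. -/

def wSob (d : ℕ) (ν γ : ℝ) (ρ : Measure (Euc d)) : ℝ≥0∞ :=
  if ρ ≪ (volume : Measure (Euc d)) then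
    fracSobolevSq d (ν/2)
      (fun v => jap v ^ (γ/2) * Real.sqrt ((ρ.rnDeriv volume v).toReal))
  else ⊤

/-!
The energy is a supremum of linear functionals of the density. With `a = w(x) √(G x)` and
`b = w(y) √(G y)`,
`(a - b)² = sup_t (a² (1 - e^t) + b² (1 - e^{-t}))`, attained at `e^t = b / a`,
so integrating against a truncated kernel and symmetrising in `(x, y)` bounds the energy of `G`
from below by `∫ h G`, where `h` is a bounded continuous function determined by the choice of
`t = g(x, y) - g(y, x)`. Countably many `h` suffice to recover the energy of every measure `ρ`;
the supremum is infinite when `ρ` has a singular part, as the kernel is not integrable.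

For symmetric `F_N` the Fisher information is the mean energy of the conditional density of one
particle given all the others. Given the others, one may choose the functional `h_m` according to
their empirical averages `1/r ∑ h_m(V_i)`. In the limit the particles are
conditionally independent with common law `ρ ~ π`, and by the law of large numbers as `r → ∞` this
selects the best `h_m` for `ρ`, which gives `∫ sup_m ∫ h_m dρ π(dρ)` as a lower bound.
-/

open Filter Topology ProbabilityTheory

section Integral

variable {α : Type*} [MeasurableSpace α] {μ : Measure α}

lemma ofReal_integral_le_lintegral_ofReal (f : α → ℝ) :
    ENNReal.ofReal (∫ x, f x ∂μ) ≤ ∫⁻ x, ENNReal.ofReal (f x) ∂μ := by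
  by_cases hf : Integrable f μ
  · rw [integral_eq_lintegral_pos_part_sub_lintegral_neg_part hf]
    exact (ENNReal.ofReal_le_ofReal (sub_le_self _ ENNReal.toReal_nonneg)).trans
      ENNReal.ofReal_toReal_le
  · simp [integral_undef hf]

lemma lintegral_ofReal_le_of_forall_integral_le {f : ℕ → α → ℝ} {g : α → ℝ} {S : ℝ≥0∞}
    (hf : ∀ n, Integrable (f n) μ) (hf0 : ∀ n, 0 ≤ᵐ[μ] f n)
    (hfg : ∀ᵐ x ∂μ, Tendsto (fun n => f n x) atTop (𝓝 (g x)))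
    (hS : ∀ n, ENNReal.ofReal (∫ x, f n x ∂μ) ≤ S) :
    ∫⁻ x, ENNReal.ofReal (g x) ∂μ ≤ S := by
  calc ∫⁻ x, ENNReal.ofReal (g x) ∂μ
      = ∫⁻ x, liminf (fun n => ENNReal.ofReal (f n x)) atTop ∂μ := by
        refine lintegral_congr_ae ?_
        filter_upwards [hfg] with x hx
        exact ((ENNReal.continuous_ofReal.tendsto _).comp hx).liminf_eq.symm
    _ ≤ liminf (fun n => ∫⁻ x, ENNReal.ofReal (f n x) ∂μ) atTop :=
        lintegral_liminf_le' fun n => (hf n).aemeasurable.ennreal_ofReal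
    _ ≤ S := by
        refine liminf_le_of_le (by isBoundedDefault) fun b hb => ?_
        obtain ⟨n, hn⟩ := hb.exists
        exact hn.trans ((ofReal_integral_eq_lintegral_ofReal (hf n) (hf0 n)).ge.trans (hS n))

lemma ofReal_sum_mul_le_of_sum_eq_one {ι : Type*} [Fintype ι] {u a : ι → ℝ} {S : ℝ≥0∞}
    (hu : ∀ i, 0 ≤ u i) (hu_sum : ∑ i, u i = 1) (ha : ∀ i, ENNReal.ofReal (a i) ≤ S) :
    ENNReal.ofReal (∑ i, u i * a i) ≤ S := by
  calc ENNReal.ofReal (∑ i, u i * a i)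
      ≤ ∑ i, ENNReal.ofReal (u i * a i) :=
        Finset.le_sum_of_subadditive _ ENNReal.ofReal_zero.le
          (fun _ _ => ENNReal.ofReal_add_le) _ _
    _ ≤ ∑ i, ENNReal.ofReal (u i) * S := by
        gcongr with i
        rw [ENNReal.ofReal_mul (hu i)]
        gcongr
        exact ha i
    _ = S := by
        rw [← Finset.sum_mul, ← ENNReal.ofReal_sum_of_nonneg fun i _ => hu i, hu_sum,
          ENNReal.ofReal_one, one_mul]

end Integral

section Cons

variable {E : Type*} [MeasurableSpace E]

lemma measurableEmbedding_finCons (n : ℕ) :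
    MeasurableEmbedding (fun z : E × (Fin n → E) => (Fin.cons z.1 z.2 : Fin (n + 1) → E)) := by
  convert (MeasurableEquiv.piFinSuccAbove
    (fun _ : Fin (n + 1) => E) 0).symm.measurableEmbedding using 1
  exact funext fun z => (Fin.insertNth_zero' z.1 z.2).symm

lemma measurePreserving_finCons (μ : Measure E) [SigmaFinite μ] (n : ℕ) :
    MeasurePreserving (fun z : E × (Fin n → E) => (Fin.cons z.1 z.2 : Fin (n + 1) → E))
      (μ.prod (Measure.pi fun _ => μ)) (Measure.pi fun _ => μ) := by
  convert (measurePreserving_piFinSuccAbove (fun _ : Fin (n + 1) => μ) 0).symm using 1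
  exact funext fun z => (Fin.insertNth_zero' z.1 z.2).symm

lemma integral_pi_finCons (μ : Measure E) [SigmaFinite μ] {n : ℕ} {f : (Fin (n + 1) → E) → ℝ}
    (hf : Integrable f (Measure.pi fun _ => μ)) :
    ∫ V, f V ∂(Measure.pi fun _ => μ)
      = ∫ V' : Fin n → E, ∫ x, f (Fin.cons x V') ∂μ ∂(Measure.pi fun _ => μ) := by
  have h_cons := measurePreserving_finCons μ n
  rw [← h_cons.integral_comp (measurableEmbedding_finCons n)]
  exact integral_prod_symm _ ((h_cons.integrable_comp_emb (measurableEmbedding_finCons n)).2 hf)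

lemma ae_integrable_finCons (μ : Measure E) [SigmaFinite μ] {n : ℕ} {f : (Fin (n + 1) → E) → ℝ}
    (hf : Integrable f (Measure.pi fun _ => μ)) :
    ∀ᵐ V' : Fin n → E ∂(Measure.pi fun _ => μ), Integrable (fun x => f (Fin.cons x V')) μ :=
  ((measurePreserving_finCons μ n).integrable_comp_emb
    (measurableEmbedding_finCons n)).2 hf |>.prod_left_ae

end Cons

section LinearMinorant

lemma abs_sum_mul_le_sum_norm {E ι : Type*} [TopologicalSpace E] [Fintype ι]
    {h : ι → BoundedContinuousFunction E ℝ} {u : ι → ℝ} (hu : ∀ m, 0 ≤ u m) (hu_sum : ∑ m, u m = 1)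
    (x : E) :
    |∑ m, u m * h m x| ≤ ∑ m, ‖h m‖ := by
  refine (Finset.abs_sum_le_sum_abs _ _).trans (Finset.sum_le_sum fun m _ => ?_)
  have hu_le : u m ≤ 1 :=
    hu_sum ▸ Finset.single_le_sum (fun i _ => hu i) (Finset.mem_univ m)
  rw [abs_mul, abs_of_nonneg (hu m)]
  exact (mul_le_of_le_one_left (abs_nonneg _) hu_le).trans ((h m).norm_coe_le_norm x)

variable {E : Type*} [MeasurableSpace E]

/-- Measurable, nonnegative and integrable functions: the unnormalised densities with respect
to `μ`. -/
structure IsDensity (μ : Measure E) (G : E → ℝ) : Prop where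
  measurable : Measurable G
  nonneg : ∀ x, 0 ≤ G x
  integrable : Integrable G μ

variable [TopologicalSpace E]

/-- The linear functional `G ↦ ∫ h G dμ` bounds the functional `J` from below on densities.
Convex lower semicontinuous functionals are suprema of such minorants. -/
def IsLinearMinorant (μ : Measure E) (J : (E → ℝ) → ℝ≥0∞)
    (h : BoundedContinuousFunction E ℝ) : Prop :=
  ∀ G, IsDensity μ G → ENNReal.ofReal (∫ x, h x * G x ∂μ) ≤ J G

variable {μ : Measure E} {J : (E → ℝ) → ℝ≥0∞}

lemma isLinearMinorant_zero : IsLinearMinorant μ J 0 := fun G _ => by simp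

variable {ι : Type*} [Fintype ι] {h : ι → BoundedContinuousFunction E ℝ}

variable [BorelSpace E]

lemma ofReal_integral_convexCombination_le (hh : ∀ m, IsLinearMinorant μ J (h m))
    {u : ι → ℝ} (hu : ∀ m, 0 ≤ u m) (hu_sum : ∑ m, u m = 1) {G : E → ℝ} (hG : IsDensity μ G) :
    ENNReal.ofReal (∫ x, (∑ m, u m * h m x) * G x ∂μ) ≤ J G := by
  have h_int (m : ι) : Integrable (fun x => h m x * G x) μ :=
    hG.integrable.bdd_mul (h m).continuous.aestronglyMeasurable
      (Eventually.of_forall (h m).norm_coe_le_norm)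
  have h_expand : ∫ x, (∑ m, u m * h m x) * G x ∂μ = ∑ m, u m * ∫ x, h m x * G x ∂μ := by
    simp only [Finset.sum_mul, mul_assoc]
    rw [integral_finsetSum _ fun m _ => (h_int m).const_mul (u m)]
    simp only [integral_const_mul]
  rw [h_expand]
  exact ofReal_sum_mul_le_of_sum_eq_one hu hu_sum fun m => hh m G hG

lemma ofReal_integral_conditional_le [SigmaFinite μ] {n : ℕ} {F : (Fin (n + 1) → E) → ℝ}
    (hF : IsDensity (Measure.pi fun _ => μ) F) (hh : ∀ m, IsLinearMinorant μ J (h m))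
    {u : ι → (Fin n → E) → ℝ} (hu_meas : ∀ m, Measurable (u m)) (hu : ∀ m V', 0 ≤ u m V')
    (hu_sum : ∀ V', ∑ m, u m V' = 1) :
    ENNReal.ofReal (∫ V, (∑ m, u m (Fin.tail V) * h m (V 0)) * F V ∂(Measure.pi fun _ => μ))
      ≤ ∫⁻ V', J (fun x => F (Fin.cons x V')) ∂(Measure.pi fun _ => μ) := by
  have h_meas : Measurable fun V : Fin (n + 1) → E => ∑ m, u m (Fin.tail V) * h m (V 0) := by
    refine Finset.measurable_fun_sum _ fun m _ => ((hu_meas m).comp ?_).mul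
      ((h m).continuous.measurable.comp (measurable_pi_apply 0))
    exact measurable_pi_lambda _ fun i => measurable_pi_apply i.succ
  have h_int : Integrable (fun V => (∑ m, u m (Fin.tail V) * h m (V 0)) * F V)
      (Measure.pi fun _ => μ) :=
    hF.integrable.bdd_mul h_meas.aestronglyMeasurable
      (Eventually.of_forall fun V => abs_sum_mul_le_sum_norm (hu · _) (hu_sum _) (V 0))
  rw [integral_pi_finCons μ h_int]
  refine (ofReal_integral_le_lintegral_ofReal _).trans (lintegral_mono_ae ?_)
  filter_upwards [ae_integrable_finCons μ hF.integrable] with V' hV'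
  simp only [Fin.tail_cons, Fin.cons_zero]
  refine ofReal_integral_convexCombination_le hh (hu · V') (hu_sum V')
    ⟨?_, fun _ => hF.nonneg _, hV'⟩
  exact hF.measurable.comp ((measurableEmbedding_finCons n).measurable.comp measurable_prodMk_right)

end LinearMinorant

section NearMaxWeight

lemma continuous_ciSup_of_finite {ι : Type*} [Finite ι] [Nonempty ι] :
    Continuous fun a : ι → ℝ => ⨆ k, a k := by
  cases nonempty_fintype ι
  simp only [← Finset.sup'_univ_eq_ciSup]
  exact Continuous.finset_sup'_apply _ fun i _ => continuous_apply i

variable {ι : Type*} [Fintype ι]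

/-- A continuous substitute for an argmax: weights on `ι` that sum to one and are carried by the
indices where `a` is within `ε` of its maximum. -/
def nearMaxWeight (ε : ℝ) (a : ι → ℝ) (m : ι) : ℝ :=
  max 0 (a m - (⨆ k, a k) + ε) / ∑ i, max 0 (a i - (⨆ k, a k) + ε)

variable {ε : ℝ} {a b : ι → ℝ}

lemma nearMaxWeight_nonneg (m : ι) : 0 ≤ nearMaxWeight ε a m := by
  unfold nearMaxWeight
  positivity

lemma nearMaxWeight_eq_zero {m : ι} (h : a m ≤ (⨆ k, a k) - ε) : nearMaxWeight ε a m = 0 := by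
  rw [nearMaxWeight, max_eq_left (by linarith), zero_div]

variable [Nonempty ι]

lemma sum_nearMaxWeight_denominator_pos (hε : 0 < ε) (a : ι → ℝ) :
    0 < ∑ i, max 0 (a i - (⨆ k, a k) + ε) := by
  obtain ⟨m, hm⟩ := exists_eq_ciSup_of_finite (f := a)
  exact Finset.sum_pos' (fun i _ => le_max_left _ _) ⟨m, Finset.mem_univ m, by simp [hm, hε]⟩

lemma sum_nearMaxWeight (hε : 0 < ε) (a : ι → ℝ) : ∑ m, nearMaxWeight ε a m = 1 := by
  simp only [nearMaxWeight, ← Finset.sum_div]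
  exact div_self (sum_nearMaxWeight_denominator_pos hε a).ne'

lemma continuous_nearMaxWeight (hε : 0 < ε) (m : ι) :
    Continuous fun a : ι → ℝ => nearMaxWeight ε a m := by
  have h_sup := continuous_ciSup_of_finite (ι := ι)
  exact Continuous.div (by fun_prop) (by fun_prop)
    fun a => (sum_nearMaxWeight_denominator_pos hε a).ne'

lemma ciSup_sub_le_sum_nearMaxWeight_mul (hε : 0 < ε) (a b : ι → ℝ) :
    (⨆ k, b k) - ε - 2 * ∑ k, |a k - b k| ≤ ∑ m, nearMaxWeight ε a m * b m := by
  have h_dist (m : ι) : |a m - b m| ≤ ∑ k, |a k - b k| :=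
    Finset.single_le_sum (f := fun k => |a k - b k|) (fun _ _ => abs_nonneg _) (Finset.mem_univ m)
  have h_sup : ⨆ k, b k ≤ (⨆ k, a k) + ∑ k, |a k - b k| := ciSup_le fun m => by
    linarith [Finite.le_ciSup a m, h_dist m, neg_abs_le (a m - b m)]
  calc (⨆ k, b k) - ε - 2 * ∑ k, |a k - b k|
      = ∑ m, nearMaxWeight ε a m * ((⨆ k, b k) - ε - 2 * ∑ k, |a k - b k|) := by
        rw [← Finset.sum_mul, sum_nearMaxWeight hε, one_mul]
    _ ≤ ∑ m, nearMaxWeight ε a m * b m := by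
        refine Finset.sum_le_sum fun m _ => ?_
        rcases le_or_gt (a m) ((⨆ k, a k) - ε) with hm | hm
        · simp [nearMaxWeight_eq_zero hm]
        · refine mul_le_mul_of_nonneg_left ?_ (nearMaxWeight_nonneg m)
          linarith [h_dist m, le_abs_self (a m - b m)]

end NearMaxWeight

section EmpiricalMean

variable {E : Type*} {r : ℕ}

/-- The average of `h` over the empirical measure of the sample `v`. -/
def empiricalMean (h : E → ℝ) (v : Fin r → E) : ℝ := (r : ℝ)⁻¹ * ∑ i, h (v i)

variable [TopologicalSpace E]

@[fun_prop]
lemma continuous_empiricalMean {h : E → ℝ} (hh : Continuous h) :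
    Continuous (empiricalMean h : (Fin r → E) → ℝ) := by
  unfold empiricalMean
  fun_prop

lemma abs_empiricalMean_le (h : BoundedContinuousFunction E ℝ) (v : Fin r → E) :
    |empiricalMean h v| ≤ ‖h‖ := by
  have h_sum : |∑ i, h (v i)| ≤ r * ‖h‖ := by
    simpa using norm_sum_le_of_le Finset.univ fun i _ => h.norm_coe_le_norm (v i)
  rw [empiricalMean, abs_mul, abs_of_nonneg (by positivity)]
  calc (r : ℝ)⁻¹ * |∑ i, h (v i)| ≤ (r : ℝ)⁻¹ * (r * ‖h‖) := by gcongr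
    _ ≤ ‖h‖ := by
      rw [← mul_assoc]
      exact mul_le_of_le_one_left (norm_nonneg h) (inv_mul_le_one)

variable [MeasurableSpace E] [BorelSpace E] {ρ : Measure E} [IsProbabilityMeasure ρ]

lemma variance_le_norm_sq (h : BoundedContinuousFunction E ℝ) : Var[h; ρ] ≤ ‖h‖ ^ 2 := by
  refine (variance_le_expectation_sq h.continuous.aestronglyMeasurable).trans ?_
  have h_sq (x : E) : ‖(h ^ 2 : E → ℝ) x‖ ≤ ‖h‖ ^ 2 := by
    rw [Pi.pow_apply, norm_pow]
    exact pow_le_pow_left₀ (norm_nonneg _) (h.norm_coe_le_norm x) 2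
  simpa using (le_abs_self _).trans
    (norm_integral_le_of_norm_le_const (μ := ρ) (Eventually.of_forall h_sq))

lemma integral_empiricalMean (hr : r ≠ 0) (h : BoundedContinuousFunction E ℝ) :
    ∫ v, empiricalMean h v ∂(Measure.pi fun _ : Fin r => ρ) = ∫ x, h x ∂ρ := by
  have h_coord (i : Fin r) : ∫ v, h (v i) ∂(Measure.pi fun _ : Fin r => ρ) = ∫ x, h x ∂ρ :=
    integral_comp_eval (μ := fun _ : Fin r => ρ) h.continuous.aestronglyMeasurable
  simp only [empiricalMean]
  rw [integral_const_mul, integral_finsetSum _ fun i _ =>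
    integrable_comp_eval (μ := fun _ : Fin r => ρ) (h.integrable ρ)]
  simp [h_coord, hr]

lemma variance_empiricalMean_le (h : BoundedContinuousFunction E ℝ) :
    Var[empiricalMean h; Measure.pi fun _ : Fin r => ρ] ≤ ‖h‖ ^ 2 / r := by
  have h_memLp : MemLp h 2 ρ := MemLp.of_bound h.continuous.aestronglyMeasurable ‖h‖
    (Eventually.of_forall h.norm_coe_le_norm)
  have h_eq : (empiricalMean h : (Fin r → E) → ℝ)
      = fun v => (r : ℝ)⁻¹ * (∑ i : Fin r, fun v : Fin r → E => h (v i)) v := by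
    funext v
    simp [empiricalMean]
  rw [h_eq, variance_const_mul, variance_sum_pi fun _ => h_memLp]
  simp only [Finset.sum_const, Finset.card_univ, Fintype.card_fin, nsmul_eq_mul]
  calc (r : ℝ)⁻¹ ^ 2 * (r * Var[h; ρ]) = Var[h; ρ] / r := by
        rcases eq_or_ne r 0 with rfl | hr
        · simp
        · field_simp
    _ ≤ ‖h‖ ^ 2 / r := by
        gcongr
        exact variance_le_norm_sq h

lemma sq_integral_abs_le {α : Type*} [MeasurableSpace α] {P : Measure α} [IsProbabilityMeasure P]
    {X : α → ℝ} (hX : MemLp X 2 P) : (∫ x, |X x| ∂P) ^ 2 ≤ ∫ x, X x ^ 2 ∂P := by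
  have h_var := variance_eq_sub hX.abs
  have h_nonneg := variance_nonneg |X| P
  simp only [Pi.pow_apply, Pi.abs_apply, sq_abs] at h_var
  linarith

lemma integral_abs_empiricalMean_sub_le [SecondCountableTopology E] (hr : r ≠ 0)
    (h : BoundedContinuousFunction E ℝ) :
    ∫ v, |empiricalMean h v - ∫ x, h x ∂ρ| ∂(Measure.pi fun _ : Fin r => ρ) ≤ ‖h‖ / √r := by
  have h_cont := continuous_empiricalMean (r := r) h.continuous
  have h_memLp : MemLp (empiricalMean h) 2 (Measure.pi fun _ : Fin r => ρ) :=
    MemLp.of_bound h_cont.aestronglyMeasurable ‖h‖ (Eventually.of_forall (abs_empiricalMean_le h))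
  have h_var := variance_empiricalMean_le (r := r) (ρ := ρ) h
  rw [variance_eq_integral h_cont.measurable.aemeasurable, integral_empiricalMean hr] at h_var
  refine abs_le_of_sq_le_sq' ?_ (by positivity) |>.2
  calc (∫ v, |empiricalMean h v - ∫ x, h x ∂ρ| ∂(Measure.pi fun _ : Fin r => ρ)) ^ 2
      ≤ ∫ v, (empiricalMean h v - ∫ x, h x ∂ρ) ^ 2 ∂(Measure.pi fun _ : Fin r => ρ) :=
        sq_integral_abs_le (h_memLp.sub (memLp_const _))
    _ ≤ ‖h‖ ^ 2 / r := h_var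
    _ = (‖h‖ / √r) ^ 2 := by rw [div_pow, Real.sq_sqrt (Nat.cast_nonneg r)]

end EmpiricalMean

section ChaosTest

variable {E : Type*} [TopologicalSpace E] {ι : Type*} [Fintype ι] {r : ℕ} {ε : ℝ}

/-- The weight of `h m` when the index maximising `∫ h m dρ` is guessed from a sample of `ρ`. -/
def sampleWeight (ε : ℝ) (h : ι → BoundedContinuousFunction E ℝ) (m : ι) (v : Fin r → E) : ℝ :=
  nearMaxWeight ε (fun k => empiricalMean (h k) v) m

lemma sampleWeight_nonneg (h : ι → BoundedContinuousFunction E ℝ) (m : ι) (v : Fin r → E) :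
    0 ≤ sampleWeight ε h m v := nearMaxWeight_nonneg m

variable [Nonempty ι]

@[fun_prop]
lemma continuous_sampleWeight (hε : 0 < ε) (h : ι → BoundedContinuousFunction E ℝ) (m : ι) :
    Continuous (sampleWeight ε h m : (Fin r → E) → ℝ) :=
  (continuous_nearMaxWeight hε m).comp
    (continuous_pi fun k => continuous_empiricalMean (h k).continuous)

lemma sum_sampleWeight (hε : 0 < ε) (h : ι → BoundedContinuousFunction E ℝ) (v : Fin r → E) :
    ∑ m, sampleWeight ε h m v = 1 := sum_nearMaxWeight hε _

/-- The test function on `E ^ (r + 1)` that uses the last `r` coordinates as a sample to choose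
the function `h m` in which the first coordinate is evaluated. -/
def chaosTest (hε : 0 < ε) (h : ι → BoundedContinuousFunction E ℝ) :
    BoundedContinuousFunction (Fin (r + 1) → E) ℝ :=
  .ofNormedAddCommGroup (fun V => ∑ m, sampleWeight ε h m (Fin.tail V) * h m (V 0))
    (by unfold Fin.tail; fun_prop) (∑ m, ‖h m‖)
    fun V => abs_sum_mul_le_sum_norm (sampleWeight_nonneg h · _) (sum_sampleWeight hε h _) (V 0)

variable [MeasurableSpace E] [BorelSpace E] [SecondCountableTopology E]

lemma integral_chaosTest (hε : 0 < ε) (h : ι → BoundedContinuousFunction E ℝ) (ρ : Measure E)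
    [IsProbabilityMeasure ρ] :
    ∫ V, chaosTest (r := r) hε h V ∂(Measure.pi fun _ => ρ)
      = ∫ v : Fin r → E, ∑ m, sampleWeight ε h m v * ∫ x, h m x ∂ρ ∂(Measure.pi fun _ => ρ) := by
  rw [integral_pi_finCons ρ ((chaosTest hε h).integrable _)]
  refine integral_congr_ae (Eventually.of_forall fun v => ?_)
  change ∫ x, (∑ m, sampleWeight ε h m (Fin.tail (Fin.cons x v : Fin (r + 1) → E))
    * h m ((Fin.cons x v : Fin (r + 1) → E) 0)) ∂ρ = _
  simp only [Fin.tail_cons, Fin.cons_zero]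
  rw [integral_finsetSum _ fun m _ => ((h m).integrable ρ).const_mul _]
  simp only [integral_const_mul]

lemma ciSup_integral_sub_le_integral_chaosTest (hε : 0 < ε) (hr : r ≠ 0)
    (h : ι → BoundedContinuousFunction E ℝ) (ρ : Measure E) [IsProbabilityMeasure ρ] :
    (⨆ m, ∫ x, h m x ∂ρ) - (ε + 2 * ∑ m, ‖h m‖ / √r)
      ≤ ∫ V, chaosTest (r := r) hε h V ∂(Measure.pi fun _ => ρ) := by
  set P := Measure.pi fun _ : Fin r => ρ
  have h_dev (m : ι) : Integrable (fun v => |empiricalMean (h m) v - ∫ x, h m x ∂ρ|) P :=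
    ((Integrable.of_bound (continuous_empiricalMean (h m).continuous).aestronglyMeasurable ‖h m‖
      (Eventually.of_forall (abs_empiricalMean_le (h m)))).sub (integrable_const _)).abs
  have h_sum_dev := (integrable_finsetSum Finset.univ fun m _ => h_dev m).const_mul 2
  have h_weight (m : ι) : Integrable (fun v => sampleWeight ε h m v * ∫ x, h m x ∂ρ) P := by
    refine (Integrable.of_bound (continuous_sampleWeight hε h m).aestronglyMeasurable 1
      (Eventually.of_forall fun v => ?_)).mul_const _
    rw [Real.norm_of_nonneg (sampleWeight_nonneg h m v), ← sum_sampleWeight hε h v]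
    exact Finset.single_le_sum (fun k _ => sampleWeight_nonneg h k v) (Finset.mem_univ m)
  rw [integral_chaosTest hε h ρ]
  calc (⨆ m, ∫ x, h m x ∂ρ) - (ε + 2 * ∑ m, ‖h m‖ / √r)
      ≤ (⨆ m, ∫ x, h m x ∂ρ) - ε
          - 2 * ∑ m, ∫ v, |empiricalMean (h m) v - ∫ x, h m x ∂ρ| ∂P := by
        rw [← sub_sub]
        gcongr with m
        exact integral_abs_empiricalMean_sub_le hr (h m)
    _ = ∫ v, ((⨆ m, ∫ x, h m x ∂ρ) - ε
          - 2 * ∑ m, |empiricalMean (h m) v - ∫ x, h m x ∂ρ|) ∂P := by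
        rw [integral_sub (integrable_const _) h_sum_dev, integral_const_mul,
          integral_finsetSum _ fun m _ => h_dev m]
        simp
    _ ≤ ∫ v, ∑ m, sampleWeight ε h m v * ∫ x, h m x ∂ρ ∂P :=
        integral_mono ((integrable_const _).sub h_sum_dev)
          (integrable_finsetSum _ fun m _ => h_weight m)
          fun v => ciSup_sub_le_sum_nearMaxWeight_mul hε _ _

end ChaosTest

section Chaos

variable {E : Type*}

/-- The first `j` coordinates of `V`, padded with `x₀` when `V` has fewer than `j` of them. -/
def firstCoords (j : ℕ) (x₀ : E) {N : ℕ} (V : Fin N → E) : Fin j → E :=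
  fun i => if h : (i : ℕ) < N then V ⟨i, h⟩ else x₀

lemma firstCoords_succ_zero (r : ℕ) (x₀ : E) {n : ℕ} (V : Fin (n + 1) → E) :
    firstCoords (r + 1) x₀ V 0 = V 0 := by
  simp [firstCoords]

lemma tail_firstCoords (r : ℕ) (x₀ : E) {n : ℕ} (V : Fin (n + 1) → E) :
    Fin.tail (firstCoords (r + 1) x₀ V) = firstCoords r x₀ (Fin.tail V) := by
  funext i
  simp [firstCoords, Fin.tail]

variable [MeasurableSpace E]

lemma measurable_firstCoords (j : ℕ) (x₀ : E) {N : ℕ} :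
    Measurable (firstCoords j x₀ : (Fin N → E) → Fin j → E) := by
  refine measurable_pi_lambda _ fun i => ?_
  by_cases hi : (i : ℕ) < N
  · simpa only [firstCoords, hi, dif_pos] using measurable_pi_apply _
  · simpa only [firstCoords, hi, dif_neg, not_false_eq_true] using measurable_const

variable [TopologicalSpace E]

instance borelSpace_probabilityMeasure [OpensMeasurableSpace E] :
    BorelSpace (ProbabilityMeasure E) := ⟨rfl⟩

/-- For every `j ≥ 2`, the law of the first `j` coordinates under the density `F n` converges
weakly to the mixture `∫ ρ^{⊗j} π(dρ)`. The density `F n` lives on `E ^ (n + 1)`. -/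
def IsChaoticToward [OpensMeasurableSpace E] (μ : Measure E)
    (F : (n : ℕ) → (Fin (n + 1) → E) → ℝ) (x₀ : E) (π : Measure (ProbabilityMeasure E)) : Prop :=
  ∀ j, 2 ≤ j → ∀ φ : BoundedContinuousFunction (Fin j → E) ℝ,
    Tendsto (fun n => ∫ V, φ (firstCoords j x₀ V) * F n V ∂(Measure.pi fun _ => μ)) atTop
      (𝓝 (∫ ρ : ProbabilityMeasure E,
        ∫ x, φ x ∂(Measure.pi fun _ : Fin j => (ρ : Measure E)) ∂π))

lemma integrable_integral_boundedContinuousFunction [OpensMeasurableSpace E]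
    (h : BoundedContinuousFunction E ℝ) (π : Measure (ProbabilityMeasure E))
    [IsFiniteMeasure π] :
    Integrable (fun ρ : ProbabilityMeasure E => ∫ x, h x ∂(ρ : Measure E)) π := by
  refine Integrable.of_bound (ProbabilityMeasure.continuous_integral_boundedContinuousFunction
    h).measurable.aestronglyMeasurable ‖h‖ (Eventually.of_forall fun ρ => ?_)
  simpa using norm_integral_le_of_norm_le_const (μ := (ρ : Measure E))
    (Eventually.of_forall h.norm_coe_le_norm)

variable [BorelSpace E] {ι : Type*}
  {μ : Measure E} {J : (E → ℝ) → ℝ≥0∞} {F : (n : ℕ) → (Fin (n + 1) → E) → ℝ} {x₀ : E}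
  {π : Measure (ProbabilityMeasure E)} {h : ι → BoundedContinuousFunction E ℝ}

lemma integrable_ciSup_integral [Finite ι] [Nonempty ι] [IsFiniteMeasure π]
    (h : ι → BoundedContinuousFunction E ℝ) :
    Integrable (fun ρ : ProbabilityMeasure E => ⨆ m, ∫ x, h m x ∂(ρ : Measure E)) π := by
  cases nonempty_fintype ι
  have h_cont : Continuous fun ρ : ProbabilityMeasure E => ⨆ m, ∫ x, h m x ∂(ρ : Measure E) :=
    continuous_ciSup_of_finite.comp (continuous_pi fun m =>
      ProbabilityMeasure.continuous_integral_boundedContinuousFunction (h m))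
  refine (integrable_finsetSum Finset.univ fun m _ =>
    (integrable_integral_boundedContinuousFunction (h m) π).abs).mono'
    h_cont.measurable.aestronglyMeasurable (Eventually.of_forall fun ρ => ?_)
  obtain ⟨m, hm⟩ := exists_eq_ciSup_of_finite (f := fun m => ∫ x, h m x ∂(ρ : Measure E))
  rw [← hm]
  exact Finset.single_le_sum (f := fun m => |∫ x, h m x ∂(ρ : Measure E)|)
    (fun _ _ => abs_nonneg _) (Finset.mem_univ m)

variable [SecondCountableTopology E] [SigmaFinite μ]

lemma ofReal_integral_chaosTest_le_lintegral [Fintype ι] [Nonempty ι] {r : ℕ}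
    {ε : ℝ} (hε : 0 < ε) (hh : ∀ m, IsLinearMinorant μ J (h m)) {n : ℕ}
    {G : (Fin (n + 1) → E) → ℝ} (hG : IsDensity (Measure.pi fun _ => μ) G) (x₀ : E) :
    ENNReal.ofReal (∫ V, chaosTest hε h (firstCoords (r + 1) x₀ V) * G V
        ∂(Measure.pi fun _ => μ))
      ≤ ∫⁻ V', J (fun x => G (Fin.cons x V')) ∂(Measure.pi fun _ => μ) := by
  have h_eq (V : Fin (n + 1) → E) : chaosTest hε h (firstCoords (r + 1) x₀ V)
      = ∑ m, sampleWeight ε h m (firstCoords r x₀ (Fin.tail V)) * h m (V 0) := by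
    rw [← tail_firstCoords, ← firstCoords_succ_zero r x₀ V]
    rfl
  simp only [h_eq]
  exact ofReal_integral_conditional_le hG hh
    (fun m => (continuous_sampleWeight hε h m).measurable.comp (measurable_firstCoords r x₀))
    (fun m V' => sampleWeight_nonneg h m _) (fun V' => sum_sampleWeight hε h _)

variable [TopologicalSpace.PseudoMetrizableSpace E] [IsProbabilityMeasure π]

lemma integrable_integral_pi {j : ℕ} (φ : BoundedContinuousFunction (Fin j → E) ℝ) :
    Integrable (fun ρ : ProbabilityMeasure E =>
      ∫ V, φ V ∂(Measure.pi fun _ : Fin j => (ρ : Measure E))) π := by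
  have h_cont : Continuous fun ρ : ProbabilityMeasure E =>
      ∫ V, φ V ∂(Measure.pi fun _ : Fin j => (ρ : Measure E)) :=
    (ProbabilityMeasure.continuous_integral_boundedContinuousFunction φ).comp
      (ProbabilityMeasure.continuous_pi.comp (continuous_pi fun _ => continuous_id))
  refine Integrable.of_bound h_cont.measurable.aestronglyMeasurable ‖φ‖
    (Eventually.of_forall fun ρ => ?_)
  simpa using norm_integral_le_of_norm_le_const
    (μ := Measure.pi fun _ : Fin j => (ρ : Measure E)) (Eventually.of_forall φ.norm_coe_le_norm)

lemma ofReal_integral_ciSup_sub_le_liminf [Fintype ι] [Nonempty ι]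
    (hF : ∀ᶠ n in atTop, IsDensity (Measure.pi fun _ => μ) (F n))
    (hchaos : IsChaoticToward μ F x₀ π) (hh : ∀ m, IsLinearMinorant μ J (h m))
    {r : ℕ} (hr : r ≠ 0) {ε : ℝ} (hε : 0 < ε) :
    ENNReal.ofReal ((∫ ρ : ProbabilityMeasure E, ⨆ m, ∫ x, h m x ∂(ρ : Measure E) ∂π)
        - (ε + 2 * ∑ m, ‖h m‖ / √r))
      ≤ liminf (fun n => ∫⁻ V', J (fun x => F n (Fin.cons x V')) ∂(Measure.pi fun _ => μ))
        atTop := by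
  have h_test : (∫ ρ : ProbabilityMeasure E, ⨆ m, ∫ x, h m x ∂(ρ : Measure E) ∂π)
        - (ε + 2 * ∑ m, ‖h m‖ / √r)
      ≤ ∫ ρ : ProbabilityMeasure E, ∫ V, chaosTest (r := r) hε h V
          ∂(Measure.pi fun _ => (ρ : Measure E)) ∂π := by
    have h_mono := integral_mono ((integrable_ciSup_integral (π := π) h).sub (integrable_const _))
      (integrable_integral_pi (chaosTest hε h))
      fun ρ => ciSup_integral_sub_le_integral_chaosTest hε hr h (ρ : Measure E)
    simp only [Pi.sub_apply] at h_mono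
    rw [integral_sub (integrable_ciSup_integral h) (integrable_const _)] at h_mono
    simpa using h_mono
  have h_lim := (ENNReal.continuous_ofReal.tendsto _).comp
    (hchaos (r + 1) (by omega) (chaosTest hε h))
  calc _ ≤ _ := ENNReal.ofReal_le_ofReal h_test
    _ = _ := h_lim.liminf_eq.symm
    _ ≤ _ := liminf_le_liminf (hF.mono fun n hn =>
        ofReal_integral_chaosTest_le_lintegral hε hh hn x₀)

lemma ofReal_integral_ciSup_le_liminf [Finite ι] [Nonempty ι]
    (hF : ∀ᶠ n in atTop, IsDensity (Measure.pi fun _ => μ) (F n))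
    (hchaos : IsChaoticToward μ F x₀ π) (hh : ∀ m, IsLinearMinorant μ J (h m)) :
    ENNReal.ofReal (∫ ρ : ProbabilityMeasure E, ⨆ m, ∫ x, h m x ∂(ρ : Measure E) ∂π)
      ≤ liminf (fun n => ∫⁻ V', J (fun x => F n (Fin.cons x V')) ∂(Measure.pi fun _ => μ))
        atTop := by
  cases nonempty_fintype ι
  have h_inv : Tendsto (fun k : ℕ => ((k : ℝ) + 1)⁻¹) atTop (𝓝 0) := by
    simpa using tendsto_one_div_add_atTop_nhds_zero_nat (𝕜 := ℝ)
  have h_error : Tendsto (fun k : ℕ => (k + 1 : ℝ)⁻¹ + 2 * ∑ m, ‖h m‖ / √((k + 1) ^ 2 : ℕ))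
      atTop (𝓝 0) := by
    have h_sqrt (k : ℕ) : √((k + 1) ^ 2 : ℕ) = (k : ℝ) + 1 := by
      push_cast
      exact Real.sqrt_sq (by positivity)
    simp only [h_sqrt, div_eq_mul_inv, ← Finset.sum_mul]
    simpa using h_inv.add ((h_inv.const_mul (∑ m, ‖h m‖)).const_mul 2)
  have h_lim := tendsto_const_nhds (x := ∫ ρ : ProbabilityMeasure E,
    ⨆ m, ∫ x, h m x ∂(ρ : Measure E) ∂π) |>.sub h_error
  rw [sub_zero] at h_lim
  exact le_of_tendsto' ((ENNReal.continuous_ofReal.tendsto _).comp h_lim) fun k =>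
    ofReal_integral_ciSup_sub_le_liminf (r := (k + 1) ^ 2) hF hchaos hh (by positivity)
      (by positivity)

/-- Passing from finitely to countably many minorants is monotone convergence over finite
subfamilies; adjoining the zero minorant makes their maxima nonnegative. -/
theorem lintegral_iSup_ofReal_integral_le_liminf [Countable ι]
    (hF : ∀ᶠ n in atTop, IsDensity (Measure.pi fun _ => μ) (F n))
    (hchaos : IsChaoticToward μ F x₀ π) (hh : ∀ m, IsLinearMinorant μ J (h m)) :
    ∫⁻ ρ : ProbabilityMeasure E, ⨆ m, ENNReal.ofReal (∫ x, h m x ∂(ρ : Measure E)) ∂π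
      ≤ liminf (fun n => ∫⁻ V', J (fun x => F n (Fin.cons x V')) ∂(Measure.pi fun _ => μ))
        atTop := by
  let H (m : ι) (ρ : ProbabilityMeasure E) : ℝ≥0∞ := ENNReal.ofReal (∫ x, h m x ∂(ρ : Measure E))
  have h_meas (m : ι) : Measurable (H m) :=
    (ProbabilityMeasure.continuous_integral_boundedContinuousFunction
      (h m)).measurable.ennreal_ofReal
  calc ∫⁻ ρ, ⨆ m, H m ρ ∂π
      = ∫⁻ ρ, ⨆ s : Finset ι, ⨆ m ∈ s, H m ρ ∂π := by simp only [← iSup_eq_iSup_finset]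
    _ = ⨆ s : Finset ι, ∫⁻ ρ, ⨆ m ∈ s, H m ρ ∂π := by
        refine lintegral_iSup_directed (fun s => (Measurable.biSup _ s.countable_toSet
          fun m _ => h_meas m).aemeasurable) (Monotone.directed_le fun s t hst ρ => ?_)
        exact biSup_mono fun m hm => hst hm
    _ ≤ _ := iSup_le fun s => ?_
  let h' : Option s → BoundedContinuousFunction E ℝ := fun o => o.elim 0 fun m => h m
  have h_none (ρ : ProbabilityMeasure E) : 0 ≤ ⨆ o, ∫ x, h' o x ∂(ρ : Measure E) := by
    simpa [h'] using Finite.le_ciSup (fun o => ∫ x, h' o x ∂(ρ : Measure E)) none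
  calc ∫⁻ ρ, ⨆ m ∈ s, H m ρ ∂π
      ≤ ∫⁻ ρ : ProbabilityMeasure E,
          ENNReal.ofReal (⨆ o, ∫ x, h' o x ∂(ρ : Measure E)) ∂π := by
        refine lintegral_mono fun ρ => iSup₂_le fun m hm => ENNReal.ofReal_le_ofReal ?_
        exact Finite.le_ciSup (fun o => ∫ x, h' o x ∂(ρ : Measure E)) (some ⟨m, hm⟩)
    _ = ENNReal.ofReal (∫ ρ : ProbabilityMeasure E, ⨆ o, ∫ x, h' o x ∂(ρ : Measure E) ∂π) :=
        (ofReal_integral_eq_lintegral_ofReal (integrable_ciSup_integral h')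
          (Eventually.of_forall h_none)).symm
    _ ≤ _ := ofReal_integral_ciSup_le_liminf hF hchaos fun o => by
        cases o with
        | none => exact isLinearMinorant_zero
        | some m => exact hh m

end Chaos

section ContinuousApproximation

variable {X : Type*} [TopologicalSpace X] [NormalSpace X] [MeasurableSpace X] [BorelSpace X]

lemma exists_seq_boundedContinuousFunction_tendsto_ae {Q : Measure X} [Q.WeaklyRegular]
    {g : X → ℝ} (hg : MemLp g 1 Q) :
    ∃ f : ℕ → BoundedContinuousFunction X ℝ,
      ∀ᵐ x ∂Q, Tendsto (fun n => f n x) atTop (𝓝 (g x)) := by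
  have h_approx (n : ℕ) : ∃ f : BoundedContinuousFunction X ℝ,
      eLpNorm (⇑f - g) 1 Q ≤ ((n : ℝ≥0∞) + 1)⁻¹ := by
    obtain ⟨f, hf, -⟩ := hg.exists_boundedContinuous_eLpNorm_sub_le (by simp)
      (ε := ((n : ℝ≥0∞) + 1)⁻¹) (by simp)
    exact ⟨f, by rwa [eLpNorm_sub_comm]⟩
  choose f hf using h_approx
  have h_inv : Tendsto (fun n : ℕ => ((n : ℝ≥0∞) + 1)⁻¹) atTop (𝓝 0) := by
    simpa using (tendsto_add_atTop_iff_nat 1).2 ENNReal.tendsto_inv_nat_nhds_zero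
  have h_measure : TendstoInMeasure Q (fun n => ⇑(f n)) atTop g :=
    tendstoInMeasure_of_tendsto_eLpNorm one_ne_zero
      (fun n => (f n).continuous.aestronglyMeasurable) hg.aestronglyMeasurable
      (tendsto_of_tendsto_of_tendsto_of_le_of_le tendsto_const_nhds h_inv (fun _ => zero_le) hf)
  obtain ⟨ns, -, hns⟩ := h_measure.exists_seq_tendsto_ae
  exact ⟨fun k => f (ns k), hns⟩

lemma exists_seq_continuous_le_tendsto_ae {Q : Measure X} [IsFiniteMeasure Q] [Q.WeaklyRegular]
    {g : X → ℝ} (hg : Measurable g) {C : ℝ} (hC : ∀ x, |g x| ≤ C) :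
    ∃ f : ℕ → C(X, ℝ), (∀ n x, |f n x| ≤ |C|) ∧
      ∀ᵐ x ∂Q, Tendsto (fun n => f n x) atTop (𝓝 (g x)) := by
  obtain ⟨f, hf⟩ := exists_seq_boundedContinuousFunction_tendsto_ae (Q := Q)
    (MemLp.of_bound hg.aestronglyMeasurable C (Eventually.of_forall hC))
  let clip (t : ℝ) : ℝ := max (-|C|) (min |C| t)
  have h_clip : Continuous clip := by fun_prop
  refine ⟨fun n => ⟨fun x => clip (f n x), h_clip.comp (f n).continuous⟩, fun n x => ?_, ?_⟩
  · exact abs_le.2 ⟨le_max_left _ _, max_le (neg_le_self (abs_nonneg C)) (min_le_left _ _)⟩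
  · filter_upwards [hf] with x hx
    have h_bound := abs_le.1 ((hC x).trans (le_abs_self C))
    have h_fixed : clip (g x) = g x := by
      simp only [clip, min_eq_right h_bound.2, max_eq_right h_bound.1]
    exact h_fixed ▸ (h_clip.tendsto (g x)).comp hx

end ContinuousApproximation

section Exchange

variable {E : Type*}

/-- The integrand `κ(x, y) (1 - exp (g(x, y) - g(y, x)))` of the variational formula for jump
energies: `κ` is a weighted jump kernel and `g` the test potential. -/
def exchangeIntegrand (κ g : E × E → ℝ) (z : E × E) : ℝ := κ z * (1 - Real.exp (g z - g z.swap))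

lemma continuous_exchangeIntegrand [TopologicalSpace E] {κ : E × E → ℝ} (hκ : Continuous κ)
    (g : C(E × E, ℝ)) :
    Continuous (exchangeIntegrand κ g) :=
  hκ.mul (continuous_const.sub
    (Real.continuous_exp.comp (g.continuous.sub (g.continuous.comp continuous_swap))))

lemma hasCompactSupport_exchangeIntegrand [TopologicalSpace E] {κ : E × E → ℝ}
    (hκ : HasCompactSupport κ) (g : E × E → ℝ) :
    HasCompactSupport (exchangeIntegrand κ g) := hκ.mul_right

lemma exchangeIntegrand_eq_zero_of_notMem_tsupport [TopologicalSpace E]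
    {κ g : E × E → ℝ} {z : E × E} (hz : z ∉ tsupport κ) :
    exchangeIntegrand κ g z = 0 := by
  rw [exchangeIntegrand, image_eq_zero_of_notMem_tsupport hz, zero_mul]

variable [MeasurableSpace E] {κ : E × E → ℝ} {Q : Measure (E × E)}

lemma measurable_exp_sub_swap {g : E × E → ℝ} (hg : Measurable g) :
    Measurable fun z : E × E => 1 - Real.exp (g z - g z.swap) :=
  ((hg.sub (hg.comp measurable_swap)).exp).const_sub 1

lemma abs_one_sub_exp_sub_le {a b C : ℝ} (ha : |a| ≤ C) (hb : |b| ≤ C) :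
    |1 - Real.exp (a - b)| ≤ 1 + Real.exp (2 * C) := by
  have h_exp : Real.exp (a - b) ≤ Real.exp (2 * C) :=
    Real.exp_le_exp.2 (by linarith [(abs_le.1 ha).2, (abs_le.1 hb).1])
  rw [abs_le]
  constructor <;> linarith [Real.exp_pos (a - b)]

lemma integrable_exchangeIntegrand (hκ : Integrable κ Q) {g : E × E → ℝ} (hg : Measurable g)
    {C : ℝ} (hC : ∀ z, |g z| ≤ C) : Integrable (exchangeIntegrand κ g) Q :=
  hκ.mul_bdd (measurable_exp_sub_swap hg).aestronglyMeasurable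
    (Eventually.of_forall fun z => abs_one_sub_exp_sub_le (hC z) (hC z.swap))

lemma tendsto_integral_exchangeIntegrand (hκ : Integrable κ Q) {f : ℕ → E × E → ℝ}
    {g : E × E → ℝ} (hf : ∀ n, Measurable (f n)) {C : ℝ} (hC : ∀ n z, |f n z| ≤ C)
    (hfg : ∀ᵐ z ∂Q, Tendsto (fun n => f n z) atTop (𝓝 (g z)))
    (hfg_swap : ∀ᵐ z ∂Q, Tendsto (fun n => f n z.swap) atTop (𝓝 (g z.swap))) :
    Tendsto (fun n => ∫ z, exchangeIntegrand κ (f n) z ∂Q) atTop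
      (𝓝 (∫ z, exchangeIntegrand κ g z ∂Q)) := by
  refine tendsto_integral_of_dominated_convergence (fun z => ‖κ z‖ * (1 + Real.exp (2 * C)))
    (fun n => (integrable_exchangeIntegrand hκ (hf n) (hC n)).aestronglyMeasurable)
    (hκ.norm.mul_const _) (fun n => Eventually.of_forall fun z => ?_) ?_
  · rw [exchangeIntegrand, norm_mul]
    gcongr
    exact abs_one_sub_exp_sub_le (hC n z) (hC n z.swap)
  · filter_upwards [hfg, hfg_swap] with z hz hz_swap
    exact (((Real.continuous_exp.tendsto _).comp (hz.sub hz_swap)).const_sub 1).const_mul (κ z)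

variable [TopologicalSpace E] [SecondCountableTopology E] [LocallyCompactSpace E] [BorelSpace E]

lemma continuous_integral_exchangeIntegrand [IsFiniteMeasureOnCompacts Q] (hκ : Continuous κ)
    (hκ_supp : HasCompactSupport κ) :
    Continuous fun g : C(E × E, ℝ) => ∫ z, exchangeIntegrand κ g z ∂Q := by
  rw [← continuousOn_univ]
  refine continuousOn_integral_of_compact_support hκ_supp ?_ fun g z _ hz => ?_
  · unfold Function.uncurry exchangeIntegrand
    fun_prop
  · exact exchangeIntegrand_eq_zero_of_notMem_tsupport hz

lemma ofReal_integral_exchangeIntegrand_le_of_denseSeq [IsFiniteMeasureOnCompacts Q]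
    (hκ : Continuous κ) (hκ_supp : HasCompactSupport κ) {S : ℝ≥0∞}
    (hS : ∀ i, ENNReal.ofReal
      (∫ z, exchangeIntegrand κ (TopologicalSpace.denseSeq C(E × E, ℝ) i) z ∂Q) ≤ S)
    (g : C(E × E, ℝ)) : ENNReal.ofReal (∫ z, exchangeIntegrand κ g z ∂Q) ≤ S :=
  (TopologicalSpace.denseRange_denseSeq C(E × E, ℝ)).induction_on g
    (isClosed_le (ENNReal.continuous_ofReal.comp
      (continuous_integral_exchangeIntegrand hκ hκ_supp)) continuous_const) hS

variable [TopologicalSpace.PseudoMetrizableSpace E]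

lemma ofReal_integral_exchangeIntegrand_le_of_continuous [SFinite Q] (hκ : Integrable κ Q)
    {S : ℝ≥0∞}
    (hS : ∀ g : C(E × E, ℝ), ENNReal.ofReal (∫ z, exchangeIntegrand κ g z ∂Q) ≤ S)
    {g : E × E → ℝ} (hg : Measurable g) {C : ℝ} (hC : ∀ z, |g z| ≤ C) :
    ENNReal.ofReal (∫ z, exchangeIntegrand κ g z ∂Q) ≤ S := by
  obtain ⟨f, hf_le, hf⟩ := exists_seq_continuous_le_tendsto_ae
    (Q := Q.toFinite + Q.toFinite.map Prod.swap) hg hC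
  rw [ae_add_measure_iff, ae_toFinite] at hf
  have h_swap := ae_of_ae_map measurable_swap.aemeasurable hf.2
  rw [ae_toFinite] at h_swap
  exact le_of_tendsto' ((ENNReal.continuous_ofReal.tendsto _).comp
    (tendsto_integral_exchangeIntegrand hκ (fun n => (f n).continuous.measurable) hf_le
      hf.1 h_swap)) fun n => hS (f n)

end Exchange

section TestKernel

variable {E : Type*} [TopologicalSpace E]

/-- Admissible truncations of a jump kernel. -/
structure IsTestKernel (k : E × E → ℝ) : Prop where
  continuous : Continuous k
  hasCompactSupport : HasCompactSupport k
  nonneg : ∀ z, 0 ≤ k z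
  swap : ∀ z, k z.swap = k z

/-- The kernel `2 w(x)² k(x, y)`. The factor `2` compensates for integrating only against the
density of the first variable: symmetrising produces the contributions of both variables. -/
def weightedKernel (w : E → ℝ) (k : E × E → ℝ) (z : E × E) : ℝ := 2 * w z.1 ^ 2 * k z

variable {w : E → ℝ} {k : E × E → ℝ}

lemma continuous_weightedKernel (hw : Continuous w) (hk : IsTestKernel k) :
    Continuous (weightedKernel w k) :=
  (continuous_const.mul ((hw.comp continuous_fst).pow 2)).mul hk.continuous

lemma hasCompactSupport_weightedKernel (hk : IsTestKernel k) :
    HasCompactSupport (weightedKernel w k) := hk.hasCompactSupport.mul_left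

variable [MeasurableSpace E] [SecondCountableTopology E] [BorelSpace E]

lemma integrable_weightedKernel {Q : Measure (E × E)} [IsFiniteMeasureOnCompacts Q]
    (hw : Continuous w) (hk : IsTestKernel k) : Integrable (weightedKernel w k) Q :=
  (continuous_weightedKernel hw hk).integrable_of_hasCompactSupport
    (hasCompactSupport_weightedKernel hk)

end TestKernel

section JumpGain

/-- The pointwise dual expression of the squared increment `(a - b) ^ 2`, which is its supremum
over `t` for nonnegative `a` and `b`. -/
def jumpGain (a b t : ℝ) : ℝ := a ^ 2 * (1 - Real.exp t) + b ^ 2 * (1 - Real.exp (-t))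

lemma jumpGain_le_sq_sub (a b t : ℝ) : jumpGain a b t ≤ (a - b) ^ 2 := by
  obtain ⟨u, hu, hut⟩ : ∃ u, 0 < u ∧ Real.exp t = u ^ 2 :=
    ⟨Real.exp (t / 2), Real.exp_pos _, by rw [← Real.exp_nat_mul]; ring_nf⟩
  have h_sq : (a - b) ^ 2 - jumpGain a b t = (a * u - b * u⁻¹) ^ 2 := by
    rw [jumpGain, Real.exp_neg, hut]
    field_simp
    ring
  linarith [sq_nonneg (a * u - b * u⁻¹)]

/-- For `δ = 0` the antisymmetrisation `jumpPotential δ a b - jumpPotential δ b a` is the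
maximiser `t = log (b / a)` of `jumpGain a b`; the parameter `δ > 0` keeps it bounded. -/
def jumpPotential (δ a b : ℝ) : ℝ := Real.log (b / (a + b) + δ)

lemma abs_jumpPotential_le {δ a b : ℝ} (hδ : 0 < δ) (ha : 0 ≤ a) (hb : 0 ≤ b) :
    |jumpPotential δ a b| ≤ max |Real.log δ| |Real.log (1 + δ)| := by
  have h_frac_nonneg : 0 ≤ b / (a + b) := by positivity
  have h_frac_le_one : b / (a + b) ≤ 1 := div_le_one_of_le₀ (by linarith) (by positivity)
  exact abs_le_max_abs_abs (Real.log_le_log hδ (by linarith))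
    (Real.log_le_log (by positivity) (by linarith))

lemma jumpGain_jumpPotential {δ a b : ℝ} (hδ : 0 < δ) (ha : 0 ≤ a) (hb : 0 ≤ b)
    (hab : 0 < a + b) :
    jumpGain a b (jumpPotential δ a b - jumpPotential δ b a)
      = (a - b) ^ 2 * ((a * b + δ * (a + b) ^ 2)
        / (a * b + δ * (a + b) ^ 2 + δ ^ 2 * (a + b) ^ 2)) := by
  have h_exp {c : ℝ} (hc : 0 ≤ c) : Real.exp (Real.log (c / (a + b) + δ)) = c / (a + b) + δ :=
    Real.exp_log (by positivity)
  rw [jumpGain, neg_sub, Real.exp_sub, Real.exp_sub, jumpPotential, jumpPotential, add_comm b a,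
    h_exp ha, h_exp hb]
  have : 0 < a + δ * (a + b) := by positivity
  have : 0 < b + δ * (a + b) := by positivity
  have : 0 < a * b + δ * (a + b) ^ 2 + δ ^ 2 * (a + b) ^ 2 := by positivity
  field_simp
  ring

lemma mul_sq_sub_le_jumpGain_jumpPotential {δ a b : ℝ} (hδ : 0 < δ) (ha : 0 ≤ a) (hb : 0 ≤ b) :
    (1 - δ) * (a - b) ^ 2 ≤ jumpGain a b (jumpPotential δ a b - jumpPotential δ b a) := by
  rcases (add_nonneg ha hb).eq_or_lt with hab | hab
  · obtain ⟨rfl, rfl⟩ : a = 0 ∧ b = 0 := ⟨by linarith, by linarith⟩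
    simp [jumpGain]
  · rw [jumpGain_jumpPotential hδ ha hb hab, mul_comm]
    gcongr
    rw [le_div_iff₀ (by positivity)]
    nlinarith [mul_nonneg hδ.le (mul_nonneg ha hb),
      mul_nonneg (pow_nonneg hδ.le 3) (sq_nonneg (a + b))]

lemma tendsto_jumpGain_jumpPotential {ι : Type*} {l : Filter ι} {δ : ι → ℝ} {a b : ℝ}
    (hδ : ∀ i, 0 < δ i) (hδ_lim : Tendsto δ l (𝓝 0)) (ha : 0 ≤ a) (hb : 0 ≤ b) :
    Tendsto (fun i => jumpGain a b (jumpPotential (δ i) a b - jumpPotential (δ i) b a)) l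
      (𝓝 ((a - b) ^ 2)) := by
  refine tendsto_of_tendsto_of_tendsto_of_le_of_le ?_ tendsto_const_nhds
    (fun i => mul_sq_sub_le_jumpGain_jumpPotential (hδ i) ha hb)
    fun i => jumpGain_le_sq_sub _ _ _
  simpa using (hδ_lim.const_sub 1).mul_const ((a - b) ^ 2)

end JumpGain

section ExchangeTest

variable {E : Type*} [TopologicalSpace E] [MeasurableSpace E] {κ : E × E → ℝ}

lemma hasCompactSupport_integral_exchangeIntegrand_snd [R1Space E] (μ : Measure E)
    (hκ_supp : HasCompactSupport κ) (g : E × E → ℝ) :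
    HasCompactSupport fun x => ∫ y, exchangeIntegrand κ g (x, y) ∂μ :=
  HasCompactSupport.intro (hκ_supp.isCompact.image continuous_fst) fun _ hx =>
    integral_eq_zero_of_ae (Eventually.of_forall fun _ =>
      exchangeIntegrand_eq_zero_of_notMem_tsupport fun h => hx ⟨_, h, rfl⟩)

variable [BorelSpace E]

lemma continuous_integral_exchangeIntegrand_snd (μ : Measure E) [IsFiniteMeasureOnCompacts μ]
    (hκ : Continuous κ) (hκ_supp : HasCompactSupport κ) (g : C(E × E, ℝ)) :
    Continuous fun x => ∫ y, exchangeIntegrand κ g (x, y) ∂μ := by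
  rw [← continuousOn_univ]
  exact continuousOn_integral_of_compact_support (hκ_supp.isCompact.image continuous_snd)
    (continuous_exchangeIntegrand hκ g).continuousOn
    fun _ _ _ hy => exchangeIntegrand_eq_zero_of_notMem_tsupport fun h => hy ⟨_, h, rfl⟩

/-- The test function `x ↦ ∫ exchangeIntegrand κ g (x, y) dμ(y)` by which a density is tested in
the variational formula for jump energies. -/
def exchangeTest [R1Space E] (μ : Measure E) [IsFiniteMeasureOnCompacts μ]
    (hκ : Continuous κ) (hκ_supp : HasCompactSupport κ) (g : C(E × E, ℝ)) :
    BoundedContinuousFunction E ℝ :=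
  BoundedContinuousFunction.ofNormedAddCommGroup _
    (continuous_integral_exchangeIntegrand_snd μ hκ hκ_supp g) _
    ((continuous_integral_exchangeIntegrand_snd μ hκ hκ_supp g).bounded_above_of_compact_support
      (hasCompactSupport_integral_exchangeIntegrand_snd μ hκ_supp g)).choose_spec

lemma integral_exchangeTest [R1Space E] [SecondCountableTopology E] [LocallyCompactSpace E]
    (μ ρ : Measure E) [IsLocallyFiniteMeasure μ] [IsFiniteMeasure ρ]
    (hκ : Continuous κ) (hκ_supp : HasCompactSupport κ) (g : C(E × E, ℝ)) :
    ∫ x, exchangeTest μ hκ hκ_supp g x ∂ρ = ∫ z, exchangeIntegrand κ g z ∂(ρ.prod μ) :=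
  (integral_prod _ ((continuous_exchangeIntegrand hκ g).integrable_of_hasCompactSupport
    (hasCompactSupport_exchangeIntegrand hκ_supp g))).symm

end ExchangeTest

section JumpEnergy

variable {E : Type*} {w G : E → ℝ} {k : E × E → ℝ}

lemma symmetrize_exchangeIntegrand_weightedKernel (hG : ∀ x, 0 ≤ G x)
    (hk : ∀ z, k z.swap = k z) (g : E × E → ℝ) (z : E × E) :
    k z * jumpGain (w z.1 * √(G z.1)) (w z.2 * √(G z.2)) (g z - g z.swap)
      = 2⁻¹ * (G z.1 * exchangeIntegrand (weightedKernel w k) g z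
        + G z.swap.1 * exchangeIntegrand (weightedKernel w k) g z.swap) := by
  simp only [jumpGain, exchangeIntegrand, weightedKernel, mul_pow, Real.sq_sqrt (hG _), hk,
    Prod.swap_swap, Prod.fst_swap, neg_sub]
  ring

variable [MeasurableSpace E]

/-- The Dirichlet energy of the jump kernel `K`, the abstract form of the fractional Sobolev
seminorm. -/
def jumpEnergy (μ : Measure E) (K : E × E → ℝ) (f : E → ℝ) : ℝ≥0∞ :=
  ∫⁻ z, ENNReal.ofReal ((f z.1 - f z.2) ^ 2 * K z) ∂(μ.prod μ)

variable {μ : Measure E}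

lemma IsDensity.isFiniteMeasure_withDensity (hG : IsDensity μ G) :
    IsFiniteMeasure (μ.withDensity fun x => ENNReal.ofReal (G x)) :=
  isFiniteMeasure_withDensity_ofReal hG.integrable.2

variable [SigmaFinite μ]

lemma integrable_and_integral_jumpGain (hG : IsDensity μ G)
    (hk : ∀ z, k z.swap = k z) {g : E × E → ℝ}
    (hg : Integrable (exchangeIntegrand (weightedKernel w k) g)
      ((μ.withDensity fun x => ENNReal.ofReal (G x)).prod μ)) :
    Integrable (fun z => k z *
        jumpGain (w z.1 * √(G z.1)) (w z.2 * √(G z.2)) (g z - g z.swap)) (μ.prod μ) ∧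
      ∫ z, k z * jumpGain (w z.1 * √(G z.1)) (w z.2 * √(G z.2)) (g z - g z.swap) ∂(μ.prod μ)
        = ∫ z, exchangeIntegrand (weightedKernel w k) g z
          ∂((μ.withDensity fun x => ENNReal.ofReal (G x)).prod μ) := by
  let f (z : E × E) : ℝ := G z.1 * exchangeIntegrand (weightedKernel w k) g z
  have h_density : Measurable fun x => ENNReal.ofReal (G x) := hG.measurable.ennreal_ofReal
  have h_density_fst : Measurable fun z : E × E => ENNReal.ofReal (G z.1) :=
    h_density.comp measurable_fst
  rw [prod_withDensity_left h_density] at hg ⊢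
  rw [integrable_withDensity_iff_integrable_smul' h_density_fst (by simp)] at hg
  rw [integral_withDensity_eq_integral_toReal_smul h_density_fst (by simp)]
  simp only [smul_eq_mul, ENNReal.toReal_ofReal (hG.nonneg _)] at hg ⊢
  have h_swap : Integrable (fun z => f z.swap) (μ.prod μ) := hg.swap
  have h_integral_swap : ∫ z, f z.swap ∂(μ.prod μ) = ∫ z, f z ∂(μ.prod μ) :=
    integral_prod_swap f
  simp only [symmetrize_exchangeIntegrand_weightedKernel hG.nonneg hk]
  refine ⟨(hg.add h_swap).const_mul _, ?_⟩
  rw [integral_const_mul, integral_add hg h_swap]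
  linarith

end JumpEnergy

section MeasureJumpEnergy

variable {E : Type*} [MeasurableSpace E]

/-- The functional `G ↦ jumpEnergy μ K (w √G)` on densities, extended to measures by `⊤` off the
absolutely continuous ones. -/
def measureJumpEnergy (μ : Measure E) (K : E × E → ℝ) (w : E → ℝ) (ρ : Measure E) : ℝ≥0∞ :=
  if ρ ≪ μ then jumpEnergy μ K (fun x => w x * √((ρ.rnDeriv μ x).toReal)) else ⊤

variable {μ : Measure E} {w : E → ℝ} {k : E × E → ℝ} {K : E × E → ℝ}

variable [TopologicalSpace E] [BorelSpace E] [SecondCountableTopology E] [LocallyCompactSpace E]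
variable [R1Space E] [IsLocallyFiniteMeasure μ]

lemma isLinearMinorant_exchangeTest (hw : Continuous w) (hk : IsTestKernel k)
    (hkK : ∀ z, k z ≤ K z) (g : C(E × E, ℝ)) :
    IsLinearMinorant μ (fun G => jumpEnergy μ K fun x => w x * √(G x))
      (exchangeTest μ (continuous_weightedKernel hw hk)
        (hasCompactSupport_weightedKernel hk) g) := by
  intro G hG
  have h_finite := hG.isFiniteMeasure_withDensity
  set κ := weightedKernel w k
  let ρ := μ.withDensity fun x => ENNReal.ofReal (G x)
  have hκ : Continuous κ := continuous_weightedKernel hw hk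
  have hκ_supp : HasCompactSupport κ := hasCompactSupport_weightedKernel hk
  have h_int : Integrable (exchangeIntegrand κ g) (ρ.prod μ) :=
    (continuous_exchangeIntegrand hκ g).integrable_of_hasCompactSupport
      (hasCompactSupport_exchangeIntegrand hκ_supp g)
  have h_test : ∫ x, exchangeTest μ hκ hκ_supp g x * G x ∂μ
      = ∫ z, exchangeIntegrand κ g z ∂(ρ.prod μ) := by
    rw [← integral_exchangeTest μ ρ hκ hκ_supp, integral_withDensity_eq_integral_toReal_smul
      hG.measurable.ennreal_ofReal (by simp)]
    simp only [ENNReal.toReal_ofReal (hG.nonneg _), smul_eq_mul, mul_comm (G _)]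
  rw [h_test, ← (integrable_and_integral_jumpGain hG hk.swap h_int).2]
  refine (ofReal_integral_le_lintegral_ofReal _).trans (lintegral_mono fun z => ?_)
  refine ENNReal.ofReal_le_ofReal ?_
  rw [mul_comm (k z)]
  exact (mul_le_mul_of_nonneg_right (jumpGain_le_sq_sub _ _ _) (hk.nonneg z)).trans
    (mul_le_mul_of_nonneg_left (hkK z) (sq_nonneg _))

end MeasureJumpEnergy

section DualityLowerBound

variable {E : Type*} [MeasurableSpace E] {μ ρ : Measure E}
variable {w : E → ℝ} {k : ℕ → E × E → ℝ} {K : E × E → ℝ} {S : ℝ≥0∞}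

lemma lintegral_exchangeIntegrand_indicator_of_mem (hw_pos : ∀ x, 0 < w x) (hK : Measurable K)
    {A : Set E} (hμA : μ A = 0) {x : E} (hx : x ∈ A)
    (hK_top : ∫⁻ y, ENNReal.ofReal (K (x, y)) ∂μ = ⊤) :
    ∫⁻ y, ENNReal.ofReal (exchangeIntegrand (weightedKernel w K)
      (fun z => A.indicator 1 z.2) (x, y)) ∂μ = ⊤ := by
  have h_pos : 0 < 2 * w x ^ 2 * (1 - Real.exp (-1)) :=
    mul_pos (by have := hw_pos x; positivity) (sub_pos.2 (Real.exp_lt_one_iff.2 (by norm_num)))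
  calc ∫⁻ y, ENNReal.ofReal (exchangeIntegrand (weightedKernel w K)
        (fun z => A.indicator 1 z.2) (x, y)) ∂μ
      = ∫⁻ y, ENNReal.ofReal (2 * w x ^ 2 * (1 - Real.exp (-1)))
          * ENNReal.ofReal (K (x, y)) ∂μ := by
        refine lintegral_congr_ae ?_
        filter_upwards [measure_eq_zero_iff_ae_notMem.1 hμA] with y hy
        rw [← ENNReal.ofReal_mul h_pos.le]
        simp only [exchangeIntegrand, weightedKernel, Prod.snd_swap, Set.indicator_of_mem hx,
          Set.indicator_of_notMem hy, Pi.one_apply, zero_sub]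
        ring_nf
    _ = ⊤ := by
        rw [lintegral_const_mul _ (by fun_prop), hK_top,
          ENNReal.mul_top (ENNReal.ofReal_pos.2 h_pos).ne']

variable [SigmaFinite μ]

lemma lintegral_exchangeIntegrand_indicator_eq_top (hw : Measurable w)
    (hw_pos : ∀ x, 0 < w x) (hK : Measurable K)
    (hK_top : ∀ x, ∫⁻ y, ENNReal.ofReal (K (x, y)) ∂μ = ⊤) {A : Set E} (hA : MeasurableSet A)
    (hμA : μ A = 0) (hρA : ρ A ≠ 0) :
    ∫⁻ z, ENNReal.ofReal (exchangeIntegrand (weightedKernel w K)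
      (fun z => A.indicator 1 z.2) z) ∂(ρ.prod μ) = ⊤ := by
  have h_ind : Measurable fun z : E × E => A.indicator (1 : E → ℝ) z.2 :=
    (measurable_one.indicator hA).comp measurable_snd
  have h_meas : Measurable (exchangeIntegrand (weightedKernel w K)
      fun z => A.indicator 1 z.2) :=
    ((measurable_const.mul ((hw.comp measurable_fst).pow_const 2)).mul hK).mul
      (measurable_exp_sub_swap h_ind)
  rw [lintegral_prod _ h_meas.ennreal_ofReal.aemeasurable, eq_top_iff]
  calc (⊤ : ℝ≥0∞)
      = ∫⁻ _ in A, ⊤ ∂ρ := by rw [setLIntegral_const, ENNReal.top_mul hρA]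
    _ = ∫⁻ x in A, ∫⁻ y, ENNReal.ofReal (exchangeIntegrand (weightedKernel w K)
          (fun z => A.indicator 1 z.2) (x, y)) ∂μ ∂ρ :=
        (setLIntegral_congr_fun hA fun _ hx =>
          lintegral_exchangeIntegrand_indicator_of_mem hw_pos hK hμA hx (hK_top _)).symm
    _ ≤ _ := setLIntegral_le_lintegral _ _

variable [TopologicalSpace E] [BorelSpace E] [SecondCountableTopology E]

lemma eq_top_of_not_absolutelyContinuous [SFinite ρ] [IsFiniteMeasureOnCompacts (ρ.prod μ)]
    (hw : Continuous w) (hw_pos : ∀ x, 0 < w x)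
    (hk : ∀ l, IsTestKernel (k l)) (hkK : ∀ z, Tendsto (fun l => k l z) atTop (𝓝 (K z)))
    (hK_top : ∀ x, ∫⁻ y, ENNReal.ofReal (K (x, y)) ∂μ = ⊤) (hρ : ¬ρ ≪ μ)
    (hS : ∀ l (g : E × E → ℝ) (C : ℝ), Measurable g → (∀ z, |g z| ≤ C) →
      ENNReal.ofReal (∫ z, exchangeIntegrand (weightedKernel w (k l)) g z ∂(ρ.prod μ)) ≤ S) :
    S = ⊤ := by
  obtain ⟨A, hA, hμA, hρA⟩ : ∃ A, MeasurableSet A ∧ μ A = 0 ∧ ρ A ≠ 0 := by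
    contrapose! hρ
    exact Measure.AbsolutelyContinuous.mk hρ
  let g (z : E × E) : ℝ := A.indicator 1 z.2
  have hg : Measurable g := (measurable_one.indicator hA).comp measurable_snd
  have hg_nonneg (z : E × E) : 0 ≤ g z := Set.indicator_nonneg (fun _ _ => zero_le_one) z.2
  have hg_le (z : E × E) : |g z| ≤ 1 := by
    rw [abs_of_nonneg (hg_nonneg z)]
    exact Set.indicator_le_self' (fun _ _ => zero_le_one) z.2
  have hg_ae : ∀ᵐ z ∂(ρ.prod μ), g z = 0 :=
    Measure.quasiMeasurePreserving_snd.ae (p := fun y => A.indicator (1 : E → ℝ) y = 0)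
      ((measure_eq_zero_iff_ae_notMem.1 hμA).mono fun _ hy => Set.indicator_of_notMem hy _)
  have hK : Measurable K :=
    measurable_of_tendsto_metrizable (fun l => (hk l).continuous.measurable)
      (tendsto_pi_nhds.2 hkK)
  rw [eq_top_iff, ← lintegral_exchangeIntegrand_indicator_eq_top hw.measurable hw_pos hK
    hK_top hA hμA hρA]
  refine lintegral_ofReal_le_of_forall_integral_le
    (fun l => integrable_exchangeIntegrand (integrable_weightedKernel hw (hk l)) hg hg_le)
    (fun l => ?_) (Eventually.of_forall fun z => ?_) (fun l => hS l g 1 hg hg_le)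
  · filter_upwards [hg_ae] with z hz
    have h_exp : Real.exp (g z - g z.swap) ≤ 1 :=
      Real.exp_le_one_iff.2 (by linarith [hg_nonneg z.swap])
    exact mul_nonneg (mul_nonneg (by positivity) ((hk l).nonneg z)) (sub_nonneg.2 h_exp)
  · exact ((hkK z).const_mul _).mul_const _

lemma jumpEnergy_le_of_integral_exchangeIntegrand_le {G : E → ℝ} (hG : IsDensity μ G)
    [IsFiniteMeasureOnCompacts ((μ.withDensity fun x => ENNReal.ofReal (G x)).prod μ)]
    (hw : Continuous w) (hw_nonneg : ∀ x, 0 ≤ w x)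
    (hk : ∀ l, IsTestKernel (k l)) (hkK : ∀ z, Tendsto (fun l => k l z) atTop (𝓝 (K z)))
    (hS : ∀ l (g : E × E → ℝ) (C : ℝ), Measurable g → (∀ z, |g z| ≤ C) →
      ENNReal.ofReal (∫ z, exchangeIntegrand (weightedKernel w (k l)) g z
        ∂((μ.withDensity fun x => ENNReal.ofReal (G x)).prod μ)) ≤ S) :
    jumpEnergy μ K (fun x => w x * √(G x)) ≤ S := by
  let φ (x : E) : ℝ := w x * √(G x)
  have hφ : Measurable φ := hw.measurable.mul hG.measurable.sqrt
  have hφ_nonneg (x : E) : 0 ≤ φ x := mul_nonneg (hw_nonneg x) (Real.sqrt_nonneg _)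
  let δ (l : ℕ) : ℝ := 1 / (l + 1)
  have hδ_pos (l : ℕ) : 0 < δ l := by positivity
  have hδ_le (l : ℕ) : δ l ≤ 1 := div_le_one_of_le₀ (by simp) (by positivity)
  let g (l : ℕ) (z : E × E) : ℝ := jumpPotential (δ l) (φ z.1) (φ z.2)
  have hg (l : ℕ) : Measurable (g l) := by unfold g jumpPotential; fun_prop
  have hg_le (l : ℕ) (z : E × E) := abs_jumpPotential_le (hδ_pos l) (hφ_nonneg z.1) (hφ_nonneg z.2)
  have h_symm (l : ℕ) := integrable_and_integral_jumpGain hG (hk l).swap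
    (integrable_exchangeIntegrand (integrable_weightedKernel hw (hk l)) (hg l) (hg_le l))
  refine lintegral_ofReal_le_of_forall_integral_le (fun l => (h_symm l).1)
    (fun l => Eventually.of_forall fun z => mul_nonneg ((hk l).nonneg z) ?_)
    (Eventually.of_forall fun z => ?_) (fun l => ?_)
  · exact (mul_nonneg (sub_nonneg.2 (hδ_le l)) (sq_nonneg _)).trans
      (mul_sq_sub_le_jumpGain_jumpPotential (hδ_pos l) (hφ_nonneg z.1) (hφ_nonneg z.2))
  · exact mul_comm (K z) _ ▸ (hkK z).mul (tendsto_jumpGain_jumpPotential hδ_pos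
      tendsto_one_div_add_atTop_nhds_zero_nat (hφ_nonneg z.1) (hφ_nonneg z.2))
  · rw [(h_symm l).2]
    exact hS l (g l) _ (hg l) (hg_le l)

lemma measureJumpEnergy_le_of_integral_exchangeIntegrand_le [IsFiniteMeasure ρ]
    [IsFiniteMeasureOnCompacts (ρ.prod μ)] (hw : Continuous w) (hw_pos : ∀ x, 0 < w x)
    (hk : ∀ l, IsTestKernel (k l)) (hkK : ∀ z, Tendsto (fun l => k l z) atTop (𝓝 (K z)))
    (hK_top : ∀ x, ∫⁻ y, ENNReal.ofReal (K (x, y)) ∂μ = ⊤)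
    (hS : ∀ l (g : E × E → ℝ) (C : ℝ), Measurable g → (∀ z, |g z| ≤ C) →
      ENNReal.ofReal (∫ z, exchangeIntegrand (weightedKernel w (k l)) g z ∂(ρ.prod μ)) ≤ S) :
    measureJumpEnergy μ K w ρ ≤ S := by
  rw [measureJumpEnergy]
  split_ifs with hρ
  · have h_density : IsDensity μ fun x => (ρ.rnDeriv μ x).toReal :=
      ⟨(ρ.measurable_rnDeriv μ).ennreal_toReal, fun _ => ENNReal.toReal_nonneg,
        Measure.integrable_toReal_rnDeriv⟩
    have h_withDensity : μ.withDensity (fun x => ENNReal.ofReal (ρ.rnDeriv μ x).toReal) = ρ := by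
      rw [withDensity_congr_ae (ofReal_toReal_ae_eq (ρ.rnDeriv_lt_top μ)),
        Measure.withDensity_rnDeriv_eq ρ μ hρ]
    rw [← h_withDensity] at hS
    have : IsFiniteMeasureOnCompacts
        ((μ.withDensity fun x => ENNReal.ofReal (ρ.rnDeriv μ x).toReal).prod μ) := by
      rwa [h_withDensity]
    exact jumpEnergy_le_of_integral_exchangeIntegrand_le h_density hw (fun x => (hw_pos x).le)
      hk hkK hS
  · exact (eq_top_of_not_absolutelyContinuous hw hw_pos hk hkK hK_top hρ hS).ge

end DualityLowerBound

section MeanFieldLimit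

variable {E : Type*} [TopologicalSpace E] [MeasurableSpace E] [BorelSpace E]
  [SecondCountableTopology E] [LocallyCompactSpace E] [TopologicalSpace.PseudoMetrizableSpace E]
  {μ : Measure E} [IsLocallyFiniteMeasure μ]
  {w : E → ℝ} {k : ℕ → E × E → ℝ} {K : E × E → ℝ}

lemma measureJumpEnergy_le_iSup_exchangeTest (hw : Continuous w) (hw_pos : ∀ x, 0 < w x)
    (hk : ∀ l, IsTestKernel (k l)) (hkK : ∀ z, Tendsto (fun l => k l z) atTop (𝓝 (K z)))
    (hK_top : ∀ x, ∫⁻ y, ENNReal.ofReal (K (x, y)) ∂μ = ⊤) (ρ : Measure E) [IsFiniteMeasure ρ] :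
    measureJumpEnergy μ K w ρ ≤ ⨆ m : ℕ × ℕ, ENNReal.ofReal (∫ x, exchangeTest μ
      (continuous_weightedKernel hw (hk m.1)) (hasCompactSupport_weightedKernel (hk m.1))
      (TopologicalSpace.denseSeq C(E × E, ℝ) m.2) x ∂ρ) := by
  refine measureJumpEnergy_le_of_integral_exchangeIntegrand_le hw hw_pos hk hkK hK_top
    fun l g C hg hC => ?_
  refine ofReal_integral_exchangeIntegrand_le_of_continuous
    (integrable_weightedKernel hw (hk l)) (fun f => ?_) hg hC
  refine ofReal_integral_exchangeIntegrand_le_of_denseSeq (continuous_weightedKernel hw (hk l))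
    (hasCompactSupport_weightedKernel (hk l)) (fun i => ?_) f
  rw [← integral_exchangeTest μ ρ (continuous_weightedKernel hw (hk l))
    (hasCompactSupport_weightedKernel (hk l))]
  exact le_iSup (fun m : ℕ × ℕ => ENNReal.ofReal (∫ x, exchangeTest μ
    (continuous_weightedKernel hw (hk m.1)) (hasCompactSupport_weightedKernel (hk m.1))
    (TopologicalSpace.denseSeq C(E × E, ℝ) m.2) x ∂ρ)) (l, i)

theorem lintegral_measureJumpEnergy_le_liminf {F : (n : ℕ) → (Fin (n + 1) → E) → ℝ} {x₀ : E}
    {π : Measure (ProbabilityMeasure E)} [IsProbabilityMeasure π]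
    (hw : Continuous w) (hw_pos : ∀ x, 0 < w x)
    (hk : ∀ l, IsTestKernel (k l)) (hkK : ∀ z, Tendsto (fun l => k l z) atTop (𝓝 (K z)))
    (hk_le : ∀ l z, k l z ≤ K z) (hK_top : ∀ x, ∫⁻ y, ENNReal.ofReal (K (x, y)) ∂μ = ⊤)
    (hF : ∀ᶠ n in atTop, IsDensity (Measure.pi fun _ => μ) (F n))
    (hchaos : IsChaoticToward μ F x₀ π) :
    ∫⁻ ρ : ProbabilityMeasure E, measureJumpEnergy μ K w ρ ∂π
      ≤ liminf (fun n => ∫⁻ V', jumpEnergy μ K (fun x => w x * √(F n (Fin.cons x V')))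
          ∂(Measure.pi fun _ => μ)) atTop :=
  (lintegral_mono fun ρ : ProbabilityMeasure E =>
    measureJumpEnergy_le_iSup_exchangeTest hw hw_pos hk hkK hK_top (ρ : Measure E)).trans
    (lintegral_iSup_ofReal_integral_le_liminf hF hchaos fun m : ℕ × ℕ =>
      isLinearMinorant_exchangeTest hw (hk m.1) (hk_le m.1) _)

end MeanFieldLimit

section RieszKernel

variable {E : Type*} [NormedAddCommGroup E]

/-- The kernel `|x - y| ^ (-p)`. For `p ≠ 0` it vanishes on the diagonal, since `0⁻¹ = 0`. -/
def rieszKernel (p : ℝ) (z : E × E) : ℝ := (‖z.1 - z.2‖ ^ p)⁻¹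

lemma measurable_rieszKernel [MeasurableSpace E] [BorelSpace E] [SecondCountableTopology E]
    (p : ℝ) : Measurable (rieszKernel p : E × E → ℝ) := by
  unfold rieszKernel
  fun_prop

/-- A continuous cutoff, increasing to `1` with `R` and supported in the ball of radius `R`. -/
def coneCutoff (R : ℝ) (x : E) : ℝ := max 0 (1 - ‖x‖ / R)

lemma coneCutoff_nonneg (R : ℝ) (x : E) : 0 ≤ coneCutoff R x := le_max_left _ _

lemma coneCutoff_le_one {R : ℝ} (hR : 0 ≤ R) (x : E) : coneCutoff R x ≤ 1 :=
  max_le zero_le_one (sub_le_self _ (by positivity))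

lemma coneCutoff_eq_zero {R : ℝ} (hR : 0 < R) {x : E} (hx : x ∉ Metric.closedBall 0 R) :
    coneCutoff R x = 0 := by
  rw [mem_closedBall_zero_iff, not_le] at hx
  exact max_eq_left (sub_nonpos.2 ((one_le_div hR).2 hx.le))

lemma continuous_coneCutoff (R : ℝ) : Continuous (coneCutoff R : E → ℝ) := by
  unfold coneCutoff
  fun_prop

lemma tendsto_coneCutoff {ι : Type*} {l : Filter ι} {R : ι → ℝ} (hR : Tendsto R l atTop) (x : E) :
    Tendsto (fun i => coneCutoff (R i) x) l (𝓝 1) := by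
  simpa [coneCutoff] using (tendsto_const_nhds (x := (0 : ℝ))).max
    (((tendsto_const_nhds (x := ‖x‖)).div_atTop hR).const_sub 1)

/-- The Riesz kernel regularised near the diagonal and cut off at distance `R` from the origin. -/
def truncatedRieszKernel (p R : ℝ) (z : E × E) : ℝ :=
  ‖z.1 - z.2‖ / (‖z.1 - z.2‖ ^ (p + 1) + R⁻¹) * (coneCutoff R z.1 * coneCutoff R z.2)

variable {p R : ℝ}

lemma continuous_truncatedRieszKernel (hp : 0 ≤ p) (hR : 0 < R) :
    Continuous (truncatedRieszKernel p R : E × E → ℝ) := by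
  have h_pow : Continuous fun z : E × E => ‖z.1 - z.2‖ ^ (p + 1) :=
    Continuous.rpow_const (by fun_prop) fun _ => Or.inr (by positivity)
  have h_quot : Continuous fun z : E × E => ‖z.1 - z.2‖ / (‖z.1 - z.2‖ ^ (p + 1) + R⁻¹) :=
    Continuous.div (by fun_prop) (h_pow.add continuous_const) fun _ => by positivity
  exact h_quot.mul (((continuous_coneCutoff R).comp continuous_fst).mul
    ((continuous_coneCutoff R).comp continuous_snd))

lemma hasCompactSupport_truncatedRieszKernel [ProperSpace E] (hR : 0 < R) :
    HasCompactSupport (truncatedRieszKernel p R : E × E → ℝ) := by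
  refine HasCompactSupport.intro
    ((isCompact_closedBall (0 : E) R).prod (isCompact_closedBall (0 : E) R)) fun z hz => ?_
  rcases not_and_or.1 (mt Set.mem_prod.2 hz) with h | h <;>
    simp [truncatedRieszKernel, coneCutoff_eq_zero hR h]

lemma isTestKernel_truncatedRieszKernel [ProperSpace E] (hp : 0 ≤ p) (hR : 0 < R) :
    IsTestKernel (truncatedRieszKernel p R : E × E → ℝ) where
  continuous := continuous_truncatedRieszKernel hp hR
  hasCompactSupport := hasCompactSupport_truncatedRieszKernel hR
  nonneg z := mul_nonneg (by positivity)
    (mul_nonneg (coneCutoff_nonneg R z.1) (coneCutoff_nonneg R z.2))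
  swap z := by
    simp only [truncatedRieszKernel, Prod.fst_swap, Prod.snd_swap, norm_sub_rev z.2,
      mul_comm (coneCutoff R z.2)]

lemma div_rpow_add_one {r : ℝ} (hr : 0 ≤ r) (hp : p ≠ 0) : r / r ^ (p + 1) = (r ^ p)⁻¹ := by
  rcases hr.eq_or_lt with rfl | hr
  · simp [Real.zero_rpow hp]
  · rw [Real.rpow_add_one hr.ne']
    field_simp

lemma truncatedRieszKernel_le (hp : p ≠ 0) (hR : 0 < R) (z : E × E) :
    truncatedRieszKernel p R z ≤ rieszKernel p z := by
  have h_cutoff : coneCutoff R z.1 * coneCutoff R z.2 ≤ 1 :=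
    mul_le_one₀ (coneCutoff_le_one hR.le _) (coneCutoff_nonneg _ _) (coneCutoff_le_one hR.le _)
  refine (mul_le_of_le_one_right (by positivity) h_cutoff).trans ?_
  rw [rieszKernel, ← div_rpow_add_one (norm_nonneg _) hp]
  rcases (norm_nonneg (z.1 - z.2)).eq_or_lt with h | h
  · simp [← h]
  · gcongr
    exact le_add_of_nonneg_right (by positivity)

lemma tendsto_truncatedRieszKernel {ι : Type*} {l : Filter ι} {R : ι → ℝ} (hp : p ≠ 0)
    (hR : Tendsto R l atTop) (z : E × E) :
    Tendsto (fun i => truncatedRieszKernel p (R i) z) l (𝓝 (rieszKernel p z)) := by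
  have h_quot : Tendsto (fun i => ‖z.1 - z.2‖ / (‖z.1 - z.2‖ ^ (p + 1) + (R i)⁻¹)) l
      (𝓝 (rieszKernel p z)) := by
    rw [rieszKernel, ← div_rpow_add_one (norm_nonneg _) hp]
    rcases (norm_nonneg (z.1 - z.2)).eq_or_lt with h | h
    · simpa [← h] using tendsto_const_nhds
    · refine tendsto_const_nhds.div ?_ (Real.rpow_pos_of_pos h _).ne'
      simpa using (tendsto_inv_atTop_zero.comp hR).const_add (‖z.1 - z.2‖ ^ (p + 1))
  simpa [truncatedRieszKernel] using
    h_quot.mul ((tendsto_coneCutoff hR z.1).mul (tendsto_coneCutoff hR z.2))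

lemma lintegral_rieszKernel_eq_top [NormedSpace ℝ E] [FiniteDimensional ℝ E] [Nontrivial E]
    [MeasurableSpace E] [BorelSpace E] (μ : Measure E) [μ.IsAddHaarMeasure] (p : ℝ) (x : E) :
    ∫⁻ y, ENNReal.ofReal (rieszKernel p (x, y)) ∂μ = ⊤ := by
  have h_not_integrable : ¬ Integrable (fun y : E => (‖y‖ ^ p)⁻¹) μ := by
    rw [integrable_fun_norm_addHaar μ (f := fun r : ℝ => (r ^ p)⁻¹)]
    refine fun h => not_integrableOn_Ioi_rpow ((Module.finrank ℝ E - 1 : ℕ) - p)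
      (h.congr_fun (fun r (hr : 0 < r) => ?_) measurableSet_Ioi)
    simp only [smul_eq_mul]
    rw [Real.rpow_sub hr, Real.rpow_natCast, div_eq_mul_inv]
  calc ∫⁻ y, ENNReal.ofReal (rieszKernel p (x, y)) ∂μ
      = ∫⁻ y, ENNReal.ofReal (‖y‖ ^ p)⁻¹ ∂μ :=
        lintegral_sub_left_eq_self (fun y => ENNReal.ofReal (‖y‖ ^ p)⁻¹) x
    _ = ⊤ := by
      contrapose! h_not_integrable
      exact (lintegral_ofReal_ne_top_iff_integrable
        (by fun_prop : Measurable _).aestronglyMeasurable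
        (Eventually.of_forall fun _ => by positivity)).1 h_not_integrable

end RieszKernel

section CoordinateEnergy

variable {E : Type*} [MeasurableSpace E]

/-- The jump energy of `√F` for jumps of the `i`-th particle only, with the weight `w`. -/
def coordinateJumpEnergy {N : ℕ} (μ : Measure E) (K : E × E → ℝ) (w : E → ℝ)
    (F : (Fin N → E) → ℝ) (i : Fin N) : ℝ≥0∞ :=
  ∫⁻ V, ∫⁻ y, ENNReal.ofReal ((w (V i) * √(F V) - w y * √(F (Function.update V i y))) ^ 2
    * K (V i, y)) ∂μ ∂(Measure.pi fun _ => μ)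

variable {μ : Measure E} [SigmaFinite μ] {K : E × E → ℝ} {w : E → ℝ}

lemma jumpEnergy_eq_lintegral_lintegral {f : E → ℝ} (hK : Measurable K) (hf : Measurable f) :
    jumpEnergy μ K f = ∫⁻ x, ∫⁻ y, ENNReal.ofReal ((f x - f y) ^ 2 * K (x, y)) ∂μ ∂μ :=
  lintegral_prod (fun z => ENNReal.ofReal ((f z.1 - f z.2) ^ 2 * K z))
    (Measurable.aemeasurable (by fun_prop))

lemma lintegral_pi_comp_perm {ι : Type*} [Fintype ι] (σ : Equiv.Perm ι) (f : (ι → E) → ℝ≥0∞) :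
    ∫⁻ V, f (V ∘ σ) ∂(Measure.pi fun _ => μ) = ∫⁻ V, f V ∂(Measure.pi fun _ => μ) :=
  ((measurePreserving_arrowCongr' (fun _ => μ) (fun _ => μ) σ.symm (MeasurableEquiv.refl E)
    fun _ => MeasurePreserving.id μ).lintegral_comp_emb (MeasurableEquiv.measurableEmbedding _) f)

lemma coordinateJumpEnergy_eq_of_symmetric {N : ℕ} {F : (Fin N → E) → ℝ}
    (hF : ∀ (σ : Equiv.Perm (Fin N)) V, F (V ∘ σ) = F V) (i j : Fin N) :
    coordinateJumpEnergy μ K w F i = coordinateJumpEnergy μ K w F j := by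
  rw [coordinateJumpEnergy, ← lintegral_pi_comp_perm (Equiv.swap i j)]
  refine lintegral_congr fun V => lintegral_congr fun y => ?_
  have h_update : Function.update (V ∘ Equiv.swap i j) i y
      = Function.update V j y ∘ Equiv.swap i j := by
    simp [Function.update_comp_equiv]
  rw [h_update, hF, hF, Function.comp_apply, Equiv.swap_apply_left]

lemma coordinateJumpEnergy_zero {n : ℕ} {F : (Fin (n + 1) → E) → ℝ} (hF : Measurable F)
    (hw : Measurable w) (hK : Measurable K) :
    coordinateJumpEnergy μ K w F 0
      = ∫⁻ V', jumpEnergy μ K (fun x => w x * √(F (Fin.cons x V'))) ∂(Measure.pi fun _ => μ) := by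
  have h_cons : Measurable fun z : E × (Fin n → E) => F (Fin.cons z.1 z.2) :=
    hF.comp (measurableEmbedding_finCons n).measurable
  have h_old : Measurable fun q : (E × (Fin n → E)) × E => F (Fin.cons q.1.1 q.1.2) :=
    h_cons.comp measurable_fst
  have h_new : Measurable fun q : (E × (Fin n → E)) × E => F (Fin.cons q.2 q.1.2) :=
    h_cons.comp (measurable_snd.prodMk measurable_fst.snd)
  have h_integrand : Measurable fun q : (E × (Fin n → E)) × E =>
      ENNReal.ofReal
        ((w q.1.1 * √(F (Fin.cons q.1.1 q.1.2)) - w q.2 * √(F (Fin.cons q.2 q.1.2))) ^ 2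
          * K (q.1.1, q.2)) :=
    (((((hw.comp measurable_fst.fst).mul h_old.sqrt).sub
      ((hw.comp measurable_snd).mul h_new.sqrt)).pow_const 2).mul
      (hK.comp (measurable_fst.fst.prodMk measurable_snd))).ennreal_ofReal
  have h_slice (V' : Fin n → E) : Measurable fun x => F (Fin.cons x V') :=
    h_cons.comp measurable_prodMk_right
  rw [coordinateJumpEnergy, ← (measurePreserving_finCons μ n).lintegral_comp_emb
    (measurableEmbedding_finCons n)]
  simp only [Fin.cons_zero, Fin.update_cons_zero]
  rw [lintegral_prod_symm _ h_integrand.lintegral_prod_right'.aemeasurable]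
  exact lintegral_congr fun V' =>
    (jumpEnergy_eq_lintegral_lintegral hK (hw.mul (h_slice V').sqrt)).symm

end CoordinateEnergy

section EuclideanSpace

variable {d : ℕ}

lemma jap_pos (x : Euc d) : 0 < jap x := Real.sqrt_pos.2 (by positivity)

/-- The velocity weight `⟨x⟩ ^ (γ / 2)`. -/
def japWeight (γ : ℝ) (x : Euc d) : ℝ := jap x ^ (γ / 2)

lemma japWeight_pos (γ : ℝ) (x : Euc d) : 0 < japWeight γ x := Real.rpow_pos_of_pos (jap_pos x) _

lemma continuous_japWeight (γ : ℝ) : Continuous (japWeight γ : Euc d → ℝ) := by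
  have h_jap : Continuous (jap : Euc d → ℝ) := by
    unfold jap
    fun_prop
  exact h_jap.rpow_const fun x => Or.inl (jap_pos x).ne'

lemma IsProbDensity.isDensity {α : Type*} [MeasureSpace α] {f : α → ℝ} (hf : IsProbDensity f) :
    IsDensity volume f :=
  ⟨hf.1, hf.2.1, hf.1.aestronglyMeasurable, by
    simp [hasFiniteIntegral_iff_ofReal (Eventually.of_forall hf.2.1), hf.2.2]⟩

lemma fracSobolevSq_eq_jumpEnergy (s : ℝ) {f : Euc d → ℝ} (hf : Measurable f) :
    fracSobolevSq d s f = jumpEnergy volume (rieszKernel (d + 2 * s)) f :=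
  (jumpEnergy_eq_lintegral_lintegral (measurable_rieszKernel _) hf).symm

lemma wSob_eq_measureJumpEnergy (ν γ : ℝ) (ρ : Measure (Euc d)) :
    wSob d ν γ ρ = measureJumpEnergy volume (rieszKernel (d + ν)) (japWeight γ) ρ := by
  have h_meas : Measurable fun x => japWeight γ x * √((ρ.rnDeriv volume x).toReal) :=
    (continuous_japWeight γ).measurable.mul (ρ.measurable_rnDeriv volume).ennreal_toReal.sqrt
  have h_energy := fracSobolevSq_eq_jumpEnergy (ν / 2) h_meas
  rw [mul_div_cancel₀ ν two_ne_zero] at h_energy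
  rw [wSob, measureJumpEnergy, ← h_energy]
  rfl

lemma fisherInfo_eq_lintegral_jumpEnergy {n : ℕ} (ν γ : ℝ) {F : (Fin (n + 1) → Euc d) → ℝ}
    (hF : IsSymDensity d (n + 1) F) :
    fisherInfo d (n + 1) ν γ F = ∫⁻ V', jumpEnergy volume (rieszKernel (d + ν))
      (fun x => japWeight γ x * √(F (Fin.cons x V'))) := by
  calc fisherInfo d (n + 1) ν γ F
      = ((n + 1 : ℕ) : ℝ≥0∞)⁻¹ * ∑ i : Fin (n + 1),
          coordinateJumpEnergy volume (rieszKernel (d + ν)) (japWeight γ) F i := rfl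
    _ = coordinateJumpEnergy volume (rieszKernel (d + ν)) (japWeight γ) F 0 := by
      rw [Finset.sum_congr rfl fun i _ => coordinateJumpEnergy_eq_of_symmetric hF.2 i 0,
        Finset.sum_const, Finset.card_univ, Fintype.card_fin, nsmul_eq_mul, ← mul_assoc,
        ENNReal.inv_mul_cancel (by simp) (by simp), one_mul]
    _ = _ := coordinateJumpEnergy_zero hF.1.1 (continuous_japWeight γ).measurable
      (measurable_rieszKernel _)

end EuclideanSpace

theorem stmt_2_general (d : ℕ) (hd : 1 ≤ d) (ν γ : ℝ) (hν : 0 < d + ν)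
    (F : (N : ℕ) → (Fin N → Euc d) → ℝ)
    (hF : ∀ N, 2 ≤ N → IsSymDensity d N (F N))
    (π : Measure (ProbabilityMeasure (Euc d))) (hπ : IsProbabilityMeasure π)
    (hconv : ∀ j : ℕ, 2 ≤ j → ∀ φ : BoundedContinuousFunction (Fin j → Euc d) ℝ,
      Tendsto
        (fun N => ∫ V : Fin N → Euc d,
          φ (fun i : Fin j => if h : (i : ℕ) < N then V ⟨i, h⟩ else 0) * F N V)
        atTop
        (𝓝 (∫ ρ : ProbabilityMeasure (Euc d),
          (∫ x, φ x ∂(Measure.pi (fun _ : Fin j => (ρ : Measure (Euc d))))) ∂π))) :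
    (∫⁻ ρ : ProbabilityMeasure (Euc d), wSob d ν γ (ρ : Measure (Euc d)) ∂π)
      ≤ liminf (fun N => fisherInfo d N ν γ (F N)) atTop := by
  have : Nonempty (Fin d) := ⟨⟨0, hd⟩⟩
  have h_sym : ∀ᶠ n in atTop, IsSymDensity d (n + 1) (F (n + 1)) := by
    filter_upwards [eventually_ge_atTop 1] with n hn using hF (n + 1) (by omega)
  have h_chaos : IsChaoticToward volume (fun n => F (n + 1)) 0 π := fun j hj φ =>
    (hconv j hj φ).comp (tendsto_add_atTop_nat 1)
  have h_radius (l : ℕ) : (0 : ℝ) < l + 1 := l.cast_add_one_pos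
  have h_radius_top : Tendsto (fun l : ℕ => (l : ℝ) + 1) atTop atTop :=
    tendsto_atTop_add_const_right _ _ tendsto_natCast_atTop_atTop
  simp only [wSob_eq_measureJumpEnergy]
  rw [← liminf_nat_add _ 1, liminf_congr (h_sym.mono fun n hn =>
    fisherInfo_eq_lintegral_jumpEnergy ν γ hn)]
  exact lintegral_measureJumpEnergy_le_liminf (continuous_japWeight γ) (japWeight_pos γ)
    (fun l => isTestKernel_truncatedRieszKernel hν.le (h_radius l))
    (tendsto_truncatedRieszKernel hν.ne' h_radius_top)
    (fun l => truncatedRieszKernel_le hν.ne' (h_radius l))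
    (lintegral_rieszKernel_eq_top volume _) (h_sym.mono fun n hn => hn.1.isDensity) h_chaos

/-- Γ-lower semicontinuity of the fractional Fisher information along a
chaotic sequence: if the `j`-marginals of `F_N` converge weakly to the `π`-mixture
`∫ ρ^{⊗j} π(dρ)` for every `j ≥ 2`, then
`liminf_N I^N_{ν,γ}(F_N) ≥ ∫ |⟨·⟩^{γ/2}√ρ|²_{H^{ν/2}} π(dρ)`. -/
theorem stmt_2 (d : ℕ) (hd : 1 ≤ d) (ν γ : ℝ)
    (hν : ν ∈ Set.Ioo (0 : ℝ) 2) (hγ : γ ≤ 0)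
    (F : (N : ℕ) → (Fin N → Euc d) → ℝ)
    (hF : ∀ N, 2 ≤ N → IsSymDensity d N (F N))
    (π : Measure (ProbabilityMeasure (Euc d))) (hπ : IsProbabilityMeasure π)
    (hconv : ∀ j : ℕ, 2 ≤ j → ∀ φ : BoundedContinuousFunction (Fin j → Euc d) ℝ,
      Filter.Tendsto
        (fun N => ∫ V : Fin N → Euc d,
          φ (fun i : Fin j => if h : (i : ℕ) < N then V ⟨i, h⟩ else 0) * F N V)
        Filter.atTop
        (nhds (∫ ρ : ProbabilityMeasure (Euc d),
          (∫ x, φ x ∂(Measure.pi (fun _ : Fin j => (ρ : Measure (Euc d))))) ∂π))) :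
    (∫⁻ ρ : ProbabilityMeasure (Euc d), wSob d ν γ (ρ : Measure (Euc d)) ∂π)
      ≤ Filter.liminf (fun N => fisherInfo d N ν γ (F N)) Filter.atTop :=
  stmt_2_general d hd ν γ (by have := hν.1; positivity) F hF π hπ hconv

end
end
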